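/- Let n be even with n/2 ≥ 7 and n ≠ 16, and let r ≥ n/2 − 2. Let ρ : Fin r → Equiv.Perm (Fin n) be a string C-group with generated subgroup H such that: the subgroup H_0 generated by {ρ j : j ≠ 0} is transitive on Fin n; (ρ 0 * ρ 1)^2 = 1; and there is a set B ⊆ Fin n with B ≠ ∅, B ≠ Set.univ, satisfying MulAction.IsBlock for the action of H, such that ρ 0 maps B onto its complement (so {B, Bᶜ} is a block system whose two blocks are interchanged by ρ 0). Then H acts primitively on the ⟨ρ 0⟩-orbits: every X ⊆ Fin n that satisfies MulAction.IsBlock for the action of H and is invariant under ρ 0 is either empty, or of the form {x, ρ 0 x} for some x, or all of Fin n. -/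

import Mathlib

/-- A string group generated by involutions (sggi): each generator has order 2 and
nonconsecutive generators commute. -/
def IsSggi {n r : ℕ} (ρ : Fin r → Equiv.Perm (Fin n)) : Prop :=
  (∀ i, orderOf (ρ i) = 2) ∧
  ∀ i j : Fin r, 1 < |((i : ℕ) : ℤ) - ((j : ℕ) : ℤ)| → (ρ i * ρ j) ^ 2 = 1

/-- A string C-group: an sggi satisfying the intersection property. -/
def IsStringC {n r : ℕ} (ρ : Fin r → Equiv.Perm (Fin n)) : Prop :=
  IsSggi ρ ∧ ∀ J K : Set (Fin r),
    Subgroup.closure (ρ '' J) ⊓ Subgroup.closure (ρ '' K) =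
      Subgroup.closure (ρ '' (J ∩ K))

namespace StringCBlock

section Generators
variable {G : Type*} [Group G]

/-- The subgroup generated by the members of the family `σ` with index in `J`. -/
def par (σ : ℕ → G) (J : Set ℕ) : Subgroup G := Subgroup.closure (σ '' J)

/-- The first `r` members of `σ` form a string C-group generating family. -/
structure IsStringFamily (σ : ℕ → G) (r : ℕ) : Prop where
  sq : ∀ i < r, σ i * σ i = 1
  ne : ∀ i < r, σ i ≠ 1
  comm : ∀ i j, i + 1 < j → j < r → Commute (σ i) (σ j)
  ip : ∀ J K : Set ℕ, J ⊆ Set.Iio r → K ⊆ Set.Iio r → par σ J ⊓ par σ K ≤ par σ (J ∩ K)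

lemma mem_par {σ : ℕ → G} {J : Set ℕ} {i : ℕ} (hi : i ∈ J) : σ i ∈ par σ J :=
  Subgroup.subset_closure ⟨i, hi, rfl⟩

lemma par_le_iff {σ : ℕ → G} {J : Set ℕ} {S : Subgroup G} :
    par σ J ≤ S ↔ ∀ i ∈ J, σ i ∈ S := by
  simp [par, Subgroup.closure_le, Set.subset_def]

lemma par_mono (σ : ℕ → G) {J K : Set ℕ} (h : J ⊆ K) : par σ J ≤ par σ K :=
  Subgroup.closure_mono (Set.image_mono h)

lemma par_empty (σ : ℕ → G) : par σ ∅ = ⊥ := by simp [par]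

lemma commute_par {σ : ℕ → G} {J : Set ℕ} {g : G} (h : ∀ i ∈ J, Commute g (σ i)) :
    ∀ p ∈ par σ J, Commute g p := by
  have : par σ J ≤ Subgroup.centralizer {g} := par_le_iff.2 fun i hi =>
    Subgroup.mem_centralizer_singleton_iff.2 (h i hi).eq.symm
  intro p hp
  exact (Subgroup.mem_centralizer_singleton_iff.1 (this hp)).symm

lemma commute_par_par {σ : ℕ → G} {J K : Set ℕ} (h : ∀ i ∈ J, ∀ j ∈ K, Commute (σ i) (σ j)) :
    ∀ p ∈ par σ J, ∀ q ∈ par σ K, Commute p q := fun p hp =>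
  commute_par fun j hj => (commute_par (fun i hi => (h i hi j hj).symm) p hp).symm

lemma sq_eq_one_of_mem_par {σ : ℕ → G} {J : Set ℕ} (hs : ∀ i ∈ J, σ i * σ i = 1)
    (h : ∀ i ∈ J, ∀ j ∈ J, Commute (σ i) (σ j)) : ∀ p ∈ par σ J, p * p = 1 := by
  intro p hp
  have hc := commute_par_par h
  refine Subgroup.closure_induction (p := fun x _ => x * x = 1) ?_ (by simp) ?_ ?_ hp
  · rintro _ ⟨i, hi, rfl⟩
    exact hs i hi
  · intro x y hx hy h1 h2
    have hxy : x * y = y * x := (hc x hx y hy).eq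
    calc x * y * (x * y) = x * (y * x) * y := by group
      _ = x * (x * y) * y := by rw [hxy]
      _ = (x * x) * (y * y) := by group
      _ = 1 := by rw [h1, h2, one_mul]
  · intro x _ h1
    rw [← mul_inv_rev, h1, inv_one]

namespace IsStringFamily
variable {σ : ℕ → G} {r : ℕ}

lemma commute_of_apart (h : IsStringFamily σ r) {i j : ℕ} (hi : i < r) (hj : j < r)
    (hij : i + 1 < j ∨ j + 1 < i ∨ i = j) : Commute (σ i) (σ j) := by
  rcases hij with hij | hij | rfl
  · exact h.comm i j hij hj
  · exact (h.comm j i hij hi).symm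
  · exact Commute.refl _

lemma notMem_par (h : IsStringFamily σ r) {i : ℕ} (hi : i < r) {J : Set ℕ}
    (hJ : J ⊆ Set.Iio r) (hiJ : i ∉ J) : σ i ∉ par σ J := by
  intro hm
  have := h.ip {i} J (by simpa using hi) hJ ⟨mem_par rfl, hm⟩
  rw [Set.singleton_inter_eq_empty.2 hiJ, par_empty, Subgroup.mem_bot] at this
  exact h.ne i hi this

lemma two_pow_le_card_par [Finite G] (h : IsStringFamily σ r) (T : Finset ℕ)
    (hT : ∀ i ∈ T, i < r) : 2 ^ T.card ≤ Nat.card (par σ (T : Set ℕ)) := by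
  induction T using Finset.induction_on with
  | empty =>
    rw [Finset.card_empty, pow_zero]
    exact Nat.card_pos
  | insert i T hi ih =>
    have ih := ih fun j hj => hT j (Finset.mem_insert_of_mem hj)
    have hle : par σ (T : Set ℕ) ≤ par σ (↑(insert i T) : Set ℕ) := par_mono σ (by simp)
    obtain ⟨c, hc⟩ := Subgroup.card_dvd_of_le hle
    have hpos : 0 < Nat.card (par σ (↑(insert i T) : Set ℕ)) := Nat.card_pos
    have hc2 : 2 ≤ c := by
      by_contra hlt
      have : c = 0 ∨ c = 1 := by omega
      rcases this with rfl | rfl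
      · rw [hc, mul_zero] at hpos
        exact absurd hpos (lt_irrefl 0)
      · have heq := Subgroup.eq_of_le_of_card_ge hle (by rw [hc, mul_one])
        refine h.notMem_par (J := (T : Set ℕ)) (hT i (by simp)) (fun j hj => ?_)
          (by simpa using hi) ?_
        · exact hT j (Finset.mem_insert_of_mem (by simpa using hj))
        · rw [heq]
          exact mem_par (by simp)
    rw [Finset.card_insert_of_notMem hi, hc, pow_succ]
    exact Nat.mul_le_mul ih hc2

end IsStringFamily
end Generators

section Orbits
universe u
variable {A : Type*} {X : Type u} [Group A] [MulAction A X] [Finite X]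

lemma card_le_prod_orbits (hc : ∀ a b : A, a * b = b * a)
    (hf : ∀ a : A, (∀ x : X, a • x = x) → a = 1) :
    ∃ (ι : Type u) (_ : Fintype ι) (o : ι → X),
      Nat.card A ≤ ∏ i, Nat.card (MulAction.orbit A (o i)) ∧
      ∑ i, Nat.card (MulAction.orbit A (o i)) = Nat.card X := by
  classical
  let Q := Quotient (MulAction.orbitRel A X)
  have : Finite Q := Quotient.finite _
  have := Fintype.ofFinite Q
  refine ⟨Q, inferInstance, fun q => q.out, ?_, ?_⟩
  · rw [← Nat.card_pi]
    let f : A → ∀ q : Q, MulAction.orbit A q.out := fun a q => ⟨a • q.out, a, rfl⟩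
    refine Nat.card_le_card_of_injective f fun a b hab => ?_
    have hab' : ∀ q : Q, a • q.out = b • q.out := fun q => congrArg Subtype.val (congrFun hab q)
    have : b⁻¹ * a = 1 := hf _ fun x => by
      obtain ⟨g, hg⟩ : x ∈ MulAction.orbit A (Quotient.mk (MulAction.orbitRel A X) x).out :=
        MulAction.orbitRel_apply.1 (Setoid.symm' _ (Quotient.mk_out (s := MulAction.orbitRel A X) x))
      simp only at hg
      rw [← hg, smul_smul, hc _ g, ← smul_smul, ← smul_smul b⁻¹, hab', inv_smul_smul]
    exact (inv_mul_eq_one.1 this).symm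
  · rw [Nat.card_congr (MulAction.selfEquivSigmaOrbits A X), Nat.card_sigma]

lemma card_cube_le (hc : ∀ a b : A, a * b = b * a)
    (hf : ∀ a : A, (∀ x : X, a • x = x) → a = 1) : Nat.card A ^ 3 ≤ 3 ^ Nat.card X := by
  obtain ⟨ι, _, o, h1, h2⟩ := card_le_prod_orbits hc hf
  have key : ∀ n : ℕ, n ^ 3 ≤ 3 ^ n := by
    intro n
    rcases Nat.lt_or_ge n 3 with h | h
    · interval_cases n <;> norm_num
    · induction n, h using Nat.le_induction with
      | base => norm_num
      | succ n hn ih => rw [pow_succ 3]; nlinarith [mul_self_nonneg n]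
  calc Nat.card A ^ 3 ≤ (∏ i, Nat.card (MulAction.orbit A (o i))) ^ 3 := Nat.pow_le_pow_left h1 3
    _ = ∏ i, Nat.card (MulAction.orbit A (o i)) ^ 3 := by rw [Finset.prod_pow]
    _ ≤ ∏ i, 3 ^ Nat.card (MulAction.orbit A (o i)) := Finset.prod_le_prod' fun i _ => key _
    _ = 3 ^ Nat.card X := by rw [Finset.prod_pow_eq_pow_sum, h2]

lemma card_le_two_pow [Finite A] (hs : ∀ a : A, a * a = 1)
    (hf : ∀ a : A, (∀ x : X, a • x = x) → a = 1) : Nat.card A ≤ 2 ^ (Nat.card X / 2) := by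
  have hc : ∀ a b : A, a * b = b * a := fun a b => by
    have hi : ∀ a : A, a⁻¹ = a := fun a => inv_eq_of_mul_eq_one_left (hs a)
    rw [← hi (a * b), mul_inv_rev, hi, hi]
  obtain ⟨ι, _, o, h1, h2⟩ := card_le_prod_orbits hc hf
  have hp : IsPGroup 2 A := fun a => ⟨1, by rw [pow_one, pow_two, hs]⟩
  have : Fact (Nat.Prime 2) := ⟨Nat.prime_two⟩
  have key : ∀ i, Nat.card (MulAction.orbit A (o i)) ≤
      2 ^ (Nat.card (MulAction.orbit A (o i)) / 2) := fun i => by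
    obtain ⟨t, ht⟩ := hp.card_orbit (o i)
    rw [ht]
    refine Nat.pow_le_pow_right (by norm_num) ?_
    rcases t with _ | t
    · simp
    · rw [pow_succ, Nat.mul_div_cancel _ (by norm_num)]
      exact Nat.lt_two_pow_self
  calc Nat.card A ≤ ∏ i, Nat.card (MulAction.orbit A (o i)) := h1
    _ ≤ ∏ i, 2 ^ (Nat.card (MulAction.orbit A (o i)) / 2) := Finset.prod_le_prod' fun i _ => key i
    _ = 2 ^ (∑ i, Nat.card (MulAction.orbit A (o i)) / 2) := by rw [Finset.prod_pow_eq_pow_sum]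
    _ ≤ 2 ^ (Nat.card X / 2) := by
      refine Nat.pow_le_pow_right (by norm_num) ?_
      rw [← h2, Nat.le_div_iff_mul_le (by norm_num), Finset.sum_mul]
      exact Finset.sum_le_sum fun i _ => Nat.div_mul_le_self _ _

end Orbits

section Blocks
variable {G Ω K : Type*} [Group G] [MulAction G Ω] [MulAction G K]

/-- The action of a group of permutations stabilising the block over `b` on that block. -/
@[reducible] def fiberAction {β : Ω → K} (hβ : ∀ (g : G) (x : Ω), β (g • x) = g • β x)
    (S : Subgroup G) (b : K) (hS : ∀ g ∈ S, g • b = b) : MulAction S {x // β x = b} where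
  smul g x := ⟨(g : G) • x.1, by rw [hβ, x.2, hS g g.2]⟩
  one_smul x := Subtype.ext (one_smul G x.1)
  mul_smul g h x := Subtype.ext (mul_smul (g : G) h x.1)

/-- A string family acting faithfully on `Ω`, with blocks of size `ℓ` given by the fibres of `β`
and primitive, nontrivial action on the set `K` of blocks. -/
structure IsBlockFamily (σ : ℕ → G) (r : ℕ) (β : Ω → K) (ℓ : ℕ) : Prop
    extends IsStringFamily σ r where
  map_smul : ∀ (g : G) (x : Ω), β (g • x) = g • β x
  faithful : ∀ g : G, (∀ x : Ω, g • x = x) → g = 1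
  card_fiber : ∀ b : K, Nat.card {x // β x = b} = ℓ
  exists_moving : ∃ j < r, ∃ b : K, σ j • b ≠ b
  prim : ∀ s : Setoid K, (∀ i < r, ∀ b c, s b c → s (σ i • b) (σ i • c)) → s = ⊥ ∨ s = ⊤

namespace IsBlockFamily
variable {σ : ℕ → G} {r : ℕ} {β : Ω → K} {ℓ : ℕ}

section Centralizing
variable {P A : Subgroup G}

lemma smul_eq_of_commute {P A : Subgroup G} (hPA : ∀ a ∈ A, ∀ p ∈ P, Commute a p)
    (hP : ∀ b c : K, ∃ p ∈ P, p • b = c) {a : G} (ha : a ∈ A) {b : K} (hab : a • b = b) (c : K) :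
    a • c = c := by
  obtain ⟨p, hp, rfl⟩ := hP b c
  rw [smul_smul, (hPA a ha p hp).eq, ← smul_smul, hab]

lemma eq_one_of_fix_fiber (h : IsBlockFamily σ r β ℓ) (hPA : ∀ a ∈ A, ∀ p ∈ P, Commute a p)
    (hP : ∀ b c : K, ∃ p ∈ P, p • b = c) {a : G} (ha : a ∈ A) {b : K}
    (hab : ∀ x, β x = b → a • x = x) : a = 1 := by
  refine h.faithful a fun x => ?_
  obtain ⟨p, hp, hpx⟩ := hP (β x) b
  have h1 := hab (p • x) (by rw [h.map_smul, hpx])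
  rw [smul_smul, (hPA a ha p hp).eq, ← smul_smul] at h1
  exact smul_left_cancel p h1

lemma card_le_two_pow_of_fix [Finite G] [Finite Ω] (h : IsBlockFamily σ r β ℓ)
    (hPA : ∀ a ∈ A, ∀ p ∈ P, Commute a p)
    (hP : ∀ b c : K, ∃ p ∈ P, p • b = c) {b : K} (hb : ∀ a ∈ A, a • b = b)
    (hs : ∀ a ∈ A, a * a = 1) : Nat.card A ≤ 2 ^ (ℓ / 2) := by
  let := fiberAction h.map_smul A b hb
  rw [← h.card_fiber b]
  refine card_le_two_pow (fun a => Subtype.ext (hs a a.2)) fun a ha => ?_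
  exact Subtype.ext (h.eq_one_of_fix_fiber hPA hP a.2
    fun x hx => congrArg Subtype.val (ha ⟨x, hx⟩))

lemma card_cube_le_of_fix [Finite Ω] (h : IsBlockFamily σ r β ℓ)
    (hPA : ∀ a ∈ A, ∀ p ∈ P, Commute a p)
    (hP : ∀ b c : K, ∃ p ∈ P, p • b = c) {b : K} (hb : ∀ a ∈ A, a • b = b)
    (hs : ∀ a ∈ A, ∀ a' ∈ A, a * a' = a' * a) : Nat.card A ^ 3 ≤ 3 ^ ℓ := by
  let := fiberAction h.map_smul A b hb
  rw [← h.card_fiber b]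
  refine card_cube_le (fun a a' => Subtype.ext (hs a a.2 a' a'.2)) fun a ha => ?_
  exact Subtype.ext (h.eq_one_of_fix_fiber hPA hP a.2
    fun x hx => congrArg Subtype.val (ha ⟨x, hx⟩))

lemma card_le_factorial_of_fix [Finite Ω] (h : IsBlockFamily σ r β ℓ)
    (hPA : ∀ a ∈ A, ∀ p ∈ P, Commute a p)
    (hP : ∀ b c : K, ∃ p ∈ P, p • b = c) {b : K} (hb : ∀ a ∈ A, a • b = b) :
    Nat.card A ≤ ℓ.factorial := by
  let := fiberAction h.map_smul A b hb
  rw [← h.card_fiber b, ← Nat.card_perm]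
  refine Nat.card_le_card_of_injective (MulAction.toPermHom A {x // β x = b})
    ((injective_iff_map_eq_one _).2 fun a ha => ?_)
  refine Subtype.ext (h.eq_one_of_fix_fiber hPA hP a.2 (b := b) fun x hx => ?_)
  exact congrArg Subtype.val (Equiv.ext_iff.1 ha ⟨x, hx⟩)

/-- The subgroup of `A` fixing `b`. -/
def fix (A : Subgroup G) (b : K) : Subgroup G := A ⊓ MulAction.stabilizer G b

lemma card_le_mul_card_fix [Finite G] [Finite K] (A : Subgroup G) (b : K) :
    Nat.card A ≤ Nat.card K * Nat.card (fix A b) := by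
  have h1 : Nat.card (MulAction.orbit A b) * Nat.card (MulAction.stabilizer A b) = Nat.card A := by
    rw [← Nat.card_prod]
    exact Nat.card_congr (MulAction.orbitProdStabilizerEquivGroup A b)
  have h2 : Nat.card (MulAction.stabilizer A b) ≤ Nat.card (fix A b) :=
    Nat.card_le_card_of_injective (fun a => ⟨a.1.1, a.1.2, a.2⟩) fun a a' haa' =>
      Subtype.ext (Subtype.ext (congrArg (fun z => z.1) haa'))
  rw [← h1]
  exact Nat.mul_le_mul (Nat.card_le_card_of_injective _ Subtype.val_injective) h2

end Centralizing
end IsBlockFamily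
end Blocks

section Growth
variable {G K : Type*} [Group G] [MulAction G K]

lemma card_quotient_lt_of_lt [Finite K] {s t : Setoid K} (h : s < t) :
    Nat.card (Quotient t) < Nat.card (Quotient s) := by
  let f : Quotient s → Quotient t := Quotient.map' id fun _ _ hab => h.le hab
  have hf : Function.Surjective f := fun q => q.inductionOn' fun a => ⟨Quotient.mk s a, rfl⟩
  refine lt_of_le_of_ne (Nat.card_le_card_of_surjective f hf) fun heq => h.not_ge ?_
  have hb : Function.Bijective f :=
    (Nat.bijective_iff_surjective_and_card f).2 ⟨hf, heq.symm⟩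
  intro a b hab
  exact Quotient.exact (hb.1 (a₁ := Quotient.mk s a) (a₂ := Quotient.mk s b)
    (Quotient.sound (s := t) hab))

lemma orbitRel_mono {P Q : Subgroup G} (h : P ≤ Q) :
    MulAction.orbitRel P K ≤ MulAction.orbitRel Q K := by
  rintro x y ⟨g, rfl⟩
  exact ⟨⟨g, h g.2⟩, rfl⟩

/-- The number of orbits of `P` on `K`. -/
noncomputable def numOrbits (K : Type*) [MulAction G K] (P : Subgroup G) : ℕ :=
  Nat.card (Quotient (MulAction.orbitRel P K))

lemma two_mul_numOrbits_le [Finite K] {P : Subgroup G} {g : G} (hg : g ∈ P) :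
    2 * numOrbits K P ≤ Nat.card K + Nat.card {x : K // g • x = x} := by
  classical
  let Q := Quotient (MulAction.orbitRel P K)
  have : Finite Q := Quotient.finite _
  let f : Q ⊕ Q → K ⊕ {x : K // g • x = x} := Sum.elim (fun q => Sum.inl q.out)
    fun q => if hq : g • q.out = q.out then Sum.inr ⟨q.out, hq⟩ else Sum.inl (g • q.out)
  have hout : ∀ q q' : Q, g • q.out = q'.out → q' = q := fun q q' hqq => by
    rw [← Quotient.out_eq q, ← Quotient.out_eq q']
    exact Quotient.sound (s := MulAction.orbitRel P K) ⟨⟨g, hg⟩, hqq⟩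
  have hf : Function.Injective f := by
    rintro (q | q) (q' | q') hqq
    · exact congrArg _ (Quotient.out_injective (Sum.inl_injective hqq))
    · by_cases h1 : g • q'.out = q'.out
      · simp [f, h1] at hqq
      · simp only [f, h1, Sum.elim_inl, Sum.elim_inr, dite_false, Sum.inl.injEq] at hqq
        exact absurd (by rw [← hqq, hout _ _ hqq.symm]) h1
    · by_cases h1 : g • q.out = q.out
      · simp [f, h1] at hqq
      · simp only [f, h1, Sum.elim_inl, Sum.elim_inr, dite_false, Sum.inl.injEq] at hqq
        exact absurd (by rw [hqq, hout _ _ hqq]) h1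
    · by_cases h1 : g • q.out = q.out <;> by_cases h2 : g • q'.out = q'.out
      · simp only [f, h1, h2, Sum.elim_inr, dite_true, Sum.inr.injEq, Subtype.mk.injEq] at hqq
        exact congrArg _ (Quotient.out_injective hqq)
      · simp [f, h1, h2] at hqq
      · simp [f, h1, h2] at hqq
      · simp only [f, h1, h2, Sum.elim_inr, dite_false, Sum.inl.injEq, smul_left_cancel_iff] at hqq
        exact congrArg _ (Quotient.out_injective hqq)
  have := Nat.card_le_card_of_injective f hf
  rw [Nat.card_sum, Nat.card_sum] at this
  rw [numOrbits, two_mul]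
  exact this

lemma card_fixed_add_two_le [Finite K] {g : G} {x : K} (hx : g • x ≠ x) :
    Nat.card {x : K // g • x = x} + 2 ≤ Nat.card K := by
  classical
  have := Fintype.ofFinite K
  have h1 : (Finset.univ.filter fun y : K => g • y = y) ⊆ Finset.univ \ {x, g • x} := by
    intro y hy
    simp only [Finset.mem_filter, Finset.mem_univ, true_and] at hy
    simp only [Finset.mem_sdiff, Finset.mem_univ, Finset.mem_insert, Finset.mem_singleton,
      true_and, not_or]
    refine ⟨fun e => hx (e ▸ hy), fun e => hx ?_⟩
    rw [e] at hy
    exact smul_left_cancel g hy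
  have h2 := Finset.card_le_card h1
  rw [Finset.card_sdiff_of_subset (Finset.subset_univ _), Finset.card_pair hx.symm,
    Finset.card_univ] at h2
  have h3 : 2 ≤ Fintype.card K := by
    rw [← Finset.card_pair hx.symm]
    exact Finset.card_le_univ _
  rw [Nat.card_eq_fintype_card, Nat.card_eq_fintype_card, Fintype.card_subtype]
  omega

variable {Ω : Type*} [MulAction G Ω] {σ : ℕ → G} {r : ℕ} {β : Ω → K} {ℓ : ℕ}

namespace IsBlockFamily

lemma exists_fusing_neighbour (h : IsBlockFamily σ r β ℓ) {a b : ℕ} (hbr : b < r)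
    (hne : MulAction.orbitRel (par σ (Set.Icc a b)) K ≠ ⊥)
    (hnt : MulAction.orbitRel (par σ (Set.Icc a b)) K ≠ ⊤) :
    ∃ i < r, (i + 1 = a ∨ i = b + 1) ∧
      ∃ x : K, ¬ MulAction.orbitRel (par σ (Set.Icc a b)) K (σ i • x) x := by
  by_contra! hcon
  refine (h.prim (MulAction.orbitRel (par σ (Set.Icc a b)) K) fun i hi x y hxy => ?_).elim hne hnt
  by_cases hin : i ∈ Set.Icc a b ∨ i + 1 = a ∨ i = b + 1
  · have hself : ∀ z : K, MulAction.orbitRel (par σ (Set.Icc a b)) K (σ i • z) z := by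
      rcases hin with hin | hin
      · exact fun z => ⟨⟨σ i, mem_par hin⟩, rfl⟩
      · exact hcon i hi hin
    exact Setoid.trans' _ (hself x) (Setoid.trans' _ hxy (Setoid.symm' _ (hself y)))
  · obtain ⟨⟨p, hp⟩, rfl⟩ := hxy
    refine ⟨⟨p, hp⟩, ?_⟩
    have hc : Commute (σ i) p := commute_par (fun j hj => h.commute_of_apart hi
      (lt_of_le_of_lt hj.2 hbr) (by
        simp only [Set.mem_Icc] at hin hj
        omega)) p hp
    change p • σ i • y = σ i • p • y
    rw [smul_smul, smul_smul, hc.eq]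

lemma exists_transitive_interval_aux [Finite K] [Nonempty K] (h : IsBlockFamily σ r β ℓ) (j N : ℕ)
    (hN : ∀ P : Subgroup G, σ j ∈ P → MulAction.orbitRel P K ≠ ⊥) (M : ℕ) :
    ∀ a b : ℕ, a ≤ j → j ≤ b → b < r → numOrbits K (par σ (Set.Icc a b)) = M → M + (b - a) ≤ N →
      ∃ a b : ℕ, a ≤ j ∧ j ≤ b ∧ b < r ∧
        (∀ x y : K, ∃ p ∈ par σ (Set.Icc a b), p • x = y) ∧ (b - a) + 1 ≤ N := by
  induction M using Nat.strong_induction_on with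
  | _ M ih =>
    intro a b haj hjb hbr hM hMN
    by_cases ht : MulAction.orbitRel (par σ (Set.Icc a b)) K = ⊤
    · refine ⟨a, b, haj, hjb, hbr, fun x y => ?_, ?_⟩
      · have : MulAction.orbitRel (par σ (Set.Icc a b)) K y x := by rw [ht]; trivial
        obtain ⟨p, hp⟩ := this
        exact ⟨p.1, p.2, hp⟩
      · have : 0 < M := by
          rw [← hM]
          have : Finite (Quotient (MulAction.orbitRel (par σ (Set.Icc a b)) K)) :=
            Quotient.finite _
          have : Nonempty (Quotient (MulAction.orbitRel (par σ (Set.Icc a b)) K)) :=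
            ⟨Quotient.mk _ (Classical.arbitrary K)⟩
          exact Nat.card_pos
        omega
    · obtain ⟨i, hi, hia, x, hx⟩ := h.exists_fusing_neighbour hbr (hN _ (mem_par ⟨haj, hjb⟩)) ht
      have step : ∀ a' b' : ℕ, Set.Icc a b ⊆ Set.Icc a' b' → i ∈ Set.Icc a' b' →
          numOrbits K (par σ (Set.Icc a' b')) < M := fun a' b' hs hi' => by
        rw [← hM]
        refine card_quotient_lt_of_lt (lt_of_le_not_ge (orbitRel_mono (par_mono σ hs))
          fun hge => hx (hge ?_))
        exact ⟨⟨σ i, mem_par hi'⟩, rfl⟩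
      rcases hia with hia | hia
      · have h1 := step i b (Set.Icc_subset_Icc (by omega) le_rfl) ⟨le_rfl, by omega⟩
        exact ih _ h1 i b (by omega) hjb hbr rfl (by omega)
      · have h1 := step a i (Set.Icc_subset_Icc le_rfl (by omega)) ⟨by omega, le_rfl⟩
        exact ih _ h1 a i haj (by omega) hi rfl (by omega)

/-- The interval grown from a generator acting nontrivially on the blocks is transitive on the
blocks and no longer than the number of cycles of that generator. -/
lemma exists_transitive_interval [Finite K] (h : IsBlockFamily σ r β ℓ) {j : ℕ} (hj : j < r)
    {x : K} (hx : σ j • x ≠ x) : ∃ a b : ℕ, a ≤ j ∧ j ≤ b ∧ b < r ∧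
      (∀ x y : K, ∃ p ∈ par σ (Set.Icc a b), p • x = y) ∧
      2 * ((b - a) + 1) ≤ Nat.card K + Nat.card {x : K // σ j • x = x} := by
  have : Nonempty K := ⟨x⟩
  have hN : ∀ P : Subgroup G, σ j ∈ P → MulAction.orbitRel P K ≠ ⊥ := fun P hP hbot => by
    have : MulAction.orbitRel P K (σ j • x) x := ⟨⟨σ j, hP⟩, rfl⟩
    rw [hbot] at this
    exact hx this
  obtain ⟨a, b, h1, h2, h3, h4, h5⟩ := h.exists_transitive_interval_aux (K := K) j
    (numOrbits K (par σ (Set.Icc j j))) hN _ j j le_rfl le_rfl hj rfl (by omega)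
  have := two_mul_numOrbits_le (K := K) (mem_par (σ := σ) (Set.left_mem_Icc.2 (le_refl j)))
  exact ⟨a, b, h1, h2, h3, h4, by omega⟩

end IsBlockFamily
end Growth

/-- The indices below `r` at distance at least two from the interval `[a, b]`. -/
def outer (a b r : ℕ) : Finset ℕ := (Finset.range r).filter fun i => i + 1 < a ∨ b + 1 < i

lemma mem_outer {a b r i : ℕ} : i ∈ outer a b r ↔ i < r ∧ (i + 1 < a ∨ b + 1 < i) := by
  simp [outer]

lemma le_add_card_outer {a b : ℕ} (r : ℕ) (hab : a ≤ b) :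
    r ≤ (b - a + 1) + 2 + (outer a b r).card := by
  have h1 : Finset.range r ⊆ Finset.Icc (a - 1) (b + 1) ∪ outer a b r := by
    intro i hi
    simp only [Finset.mem_union, Finset.mem_Icc, mem_outer]
    have := Finset.mem_range.1 hi
    omega
  have h2 := (Finset.card_le_card h1).trans (Finset.card_union_le _ _)
  rw [Finset.card_range, Nat.card_Icc] at h2
  omega

lemma exists_sparse_subset (C : Finset ℕ) : ∃ T ⊆ C, C.card ≤ 2 * T.card ∧
    ∀ i ∈ T, ∀ j ∈ T, i + 1 < j ∨ j + 1 < i ∨ i = j := by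
  have hcard := Finset.card_filter_add_card_filter_not (s := C) (fun i => i % 2 = 0)
  rcases le_total (C.filter fun i => ¬ i % 2 = 0).card (C.filter fun i => i % 2 = 0).card with h | h
  · refine ⟨_, Finset.filter_subset (fun i => i % 2 = 0) C, by omega, fun i hi j hj => ?_⟩
    rw [Finset.mem_filter] at hi hj
    omega
  · refine ⟨_, Finset.filter_subset (fun i => ¬ i % 2 = 0) C, by omega, fun i hi j hj => ?_⟩
    rw [Finset.mem_filter] at hi hj
    omega

section Bounds
variable {G Ω K : Type*} [Group G] [MulAction G Ω] [MulAction G K]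
  {σ : ℕ → G} {r : ℕ} {β : Ω → K} {ℓ : ℕ}

namespace IsBlockFamily

lemma commute_outer (h : IsBlockFamily σ r β ℓ) {a b : ℕ} (hbr : b < r) {T : Finset ℕ}
    (hT : T ⊆ outer a b r) :
    ∀ g ∈ par σ (T : Set ℕ), ∀ p ∈ par σ (Set.Icc a b), Commute g p := by
  refine commute_par_par fun i hi j hj => ?_
  have h1 := mem_outer.1 (hT hi)
  have h2 := Set.mem_Icc.1 hj
  exact h.commute_of_apart h1.1 (by omega) (by omega)

lemma sq_of_sparse (h : IsBlockFamily σ r β ℓ) {T : Finset ℕ} (hT : ∀ i ∈ T, i < r)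
    (hs : ∀ i ∈ T, ∀ j ∈ T, Commute (σ i) (σ j)) :
    ∀ g ∈ par σ (T : Set ℕ), g * g = 1 :=
  sq_eq_one_of_mem_par (fun i hi => h.sq i (hT i hi)) fun i hi j hj => hs i hi j hj

lemma two_pow_card_le [Finite G] [Finite Ω] [Finite K] [Nonempty K] (h : IsBlockFamily σ r β ℓ)
    {P : Subgroup G} (hP : ∀ x y : K, ∃ p ∈ P, p • x = y)
    {T : Finset ℕ} (hT : ∀ i ∈ T, i < r) (hTP : ∀ g ∈ par σ (T : Set ℕ), ∀ p ∈ P, Commute g p)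
    (hs : ∀ i ∈ T, ∀ j ∈ T, Commute (σ i) (σ j)) :
    2 ^ T.card ≤ Nat.card K * 2 ^ (ℓ / 2) := by
  let b := Classical.arbitrary K
  refine (h.two_pow_le_card_par T hT).trans ((card_le_mul_card_fix _ b).trans
    (Nat.mul_le_mul_left _ ?_))
  exact h.card_le_two_pow_of_fix (fun a ha p hp => hTP a ha.1 p hp) hP (b := b)
    (fun a ha => ha.2) fun a ha => h.sq_of_sparse hT hs a ha.1

lemma two_pow_card_le_factorial [Finite G] [Finite Ω] [Finite K] [Nonempty K]
    (h : IsBlockFamily σ r β ℓ) {P : Subgroup G} (hP : ∀ x y : K, ∃ p ∈ P, p • x = y)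
    {T : Finset ℕ} (hT : ∀ i ∈ T, i < r)
    (hTP : ∀ g ∈ par σ (T : Set ℕ), ∀ p ∈ P, Commute g p) :
    2 ^ T.card ≤ Nat.card K * ℓ.factorial := by
  let b := Classical.arbitrary K
  refine (h.two_pow_le_card_par T hT).trans ((card_le_mul_card_fix _ b).trans
    (Nat.mul_le_mul_left _ ?_))
  exact h.card_le_factorial_of_fix (fun a ha p hp => hTP a ha.1 p hp) hP (b := b)
    (fun a ha => ha.2)

lemma smul_eq_of_mem_par {T : Set ℕ} (hT : ∀ i ∈ T, ∀ x : K, σ i • x = x) :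
    ∀ g ∈ par σ T, ∀ x : K, g • x = x := fun g hg x => by
  have : par σ T ≤ MulAction.stabilizer G x := par_le_iff.2 fun i hi => hT i hi x
  exact this hg

lemma card_le_half_of_fix [Finite G] [Finite Ω] [Nonempty K] (h : IsBlockFamily σ r β ℓ)
    {P : Subgroup G} (hP : ∀ x y : K, ∃ p ∈ P, p • x = y)
    {T : Finset ℕ} (hT : ∀ i ∈ T, i < r) (hTP : ∀ g ∈ par σ (T : Set ℕ), ∀ p ∈ P, Commute g p)
    (hs : ∀ i ∈ T, ∀ j ∈ T, Commute (σ i) (σ j)) (hfix : ∀ i ∈ T, ∀ x : K, σ i • x = x) :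
    T.card ≤ ℓ / 2 := by
  refine (Nat.pow_le_pow_iff_right (a := 2) (by norm_num)).1
    ((h.two_pow_le_card_par T hT).trans ?_)
  exact h.card_le_two_pow_of_fix hTP hP (b := Classical.arbitrary K)
    (fun a ha => smul_eq_of_mem_par hfix a ha _) (h.sq_of_sparse hT hs)

lemma even_card_of_fixedPointFree [Finite K] {g : G} (hg : g * g = 1)
    (hf : ∀ x : K, g • x ≠ x) : Even (Nat.card K) := by
  classical
  have := Fintype.ofFinite K
  have : Fact (Nat.Prime 2) := ⟨Nat.prime_two⟩
  have h1 := Equiv.Perm.card_fixedPoints_modEq (α := K) (f := fun x => g • x) (p := 2) (n := 1)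
    (funext fun x => by
      change g • g • x = x
      rw [smul_smul, hg, one_smul])
  have h2 : Fintype.card (Function.fixedPoints fun x : K => g • x) = 0 :=
    Fintype.card_eq_zero_iff.2 ⟨fun x => hf x.1 x.2⟩
  rw [h2] at h1
  rw [Nat.card_eq_fintype_card]
  exact Nat.even_iff.2 h1

lemma outer_smul_eq [Finite G] [Finite Ω] [Finite K] (h : IsBlockFamily σ r β ℓ)
    (hk : 3 ≤ Nat.card K) (hl : 2 ≤ ℓ) (hkl : 9 ≤ Nat.card K * ℓ) (hr : Nat.card K * ℓ ≤ r + 3)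
    {a b : ℕ} (hbr : b < r)
    (hP : ∀ x y : K, ∃ p ∈ par σ (Set.Icc a b), p • x = y) {c : ℕ} (hc : c ∈ outer a b r) :
    ∀ x : K, σ c • x = x := by
  by_contra! hcon
  obtain ⟨x, hx⟩ := hcon
  have : Nonempty K := ⟨x⟩
  have hcr := (mem_outer.1 hc).1
  have hfree : ∀ y : K, σ c • y ≠ y := fun y hy => hx <| smul_eq_of_commute
    (h.commute_outer hbr (T := {c}) (by simpa using hc)) hP (mem_par (by simp)) hy x
  obtain ⟨t, ht⟩ := even_card_of_fixedPointFree (h.sq c hcr) hfree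
  have hfix : Nat.card {x : K // σ c • x = x} = 0 := by
    rw [Nat.card_eq_zero]
    exact Or.inl ⟨fun y => hfree y.1 y.2⟩
  obtain ⟨a', b', h1, h2, h3, h4, h5⟩ := h.exists_transitive_interval hcr hx
  have h6 := le_add_card_outer r (h1.trans h2)
  rw [hfix] at h5
  have hall := h.two_pow_card_le_factorial h4 (T := outer a' b' r)
    (fun i hi => (mem_outer.1 hi).1) (h.commute_outer h3 subset_rfl)
  obtain ⟨T, hTC, hT2, hTs⟩ := exists_sparse_subset (outer a' b' r)
  have hsp := h.two_pow_card_le h4 (T := T) (fun i hi => (mem_outer.1 (hTC hi)).1)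
    (h.commute_outer h3 hTC) fun i hi j hj => h.commute_of_apart
      (mem_outer.1 (hTC hi)).1 (mem_outer.1 (hTC hj)).1 (hTs i hi j hj)
  generalize (outer a' b' r).card = C at *
  generalize Nat.card K = k at *
  have ht2 : 2 ≤ t := by omega
  have htt : ∀ t : ℕ, 2 ≤ t → 2 * t ≤ 2 ^ t := fun t ht => by
    induction t, ht using Nat.le_induction with
    | base => norm_num
    | succ n hn ih => rw [pow_succ]; omega
  have htt' : 3 ≤ t → 2 * t < 2 ^ t := fun h3 => by
    have := htt (t - 1) (by omega)
    have h4 : 2 ^ t = 2 * 2 ^ (t - 1) := by rw [← pow_succ']; congr 1; omega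
    omega
  rcases Nat.lt_or_ge ℓ 4 with hl4 | hl4
  · interval_cases ℓ
    · have hC : t + 1 ≤ C := by omega
      have h7 := (Nat.pow_le_pow_right (n := 2) (by norm_num) hC).trans hall
      have h8 := htt' (by omega)
      rw [pow_succ, (by decide : Nat.factorial 2 = 2)] at h7
      omega
    · have hC : t + 3 ≤ C := by omega
      have h7 := (Nat.pow_le_pow_right (n := 2) (by norm_num) hC).trans hall
      have h8 := htt t ht2
      rw [pow_add, (by decide : Nat.factorial 3 = 6)] at h7
      omega
  · have h7 : 2 ^ T.card ≤ 2 ^ (t + ℓ / 2) := by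
      rw [pow_add]
      exact hsp.trans (Nat.mul_le_mul_right _ (by have := htt t ht2; omega))
    have h8 := (Nat.pow_le_pow_iff_right (a := 2) (by norm_num)).1 h7
    have h9 : k * ℓ = 2 * (t * ℓ) := by rw [ht]; ring
    have h10 : 2 * ℓ + 4 * t ≤ t * ℓ + 8 := by nlinarith
    have h11 : ℓ / 2 * 2 ≤ ℓ := Nat.div_mul_le_self _ _
    omega

/-- The consequences of the interval grown from a generator moving a block, when there are at
least three blocks. -/
lemma interval_bounds [Finite G] [Finite Ω] [Finite K] (h : IsBlockFamily σ r β ℓ)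
    (hk : 3 ≤ Nat.card K) (hl : 2 ≤ ℓ) (hkl : 9 ≤ Nat.card K * ℓ) (hr : Nat.card K * ℓ ≤ r + 3)
    {j : ℕ} (hj : j < r) {x : K} (hx : σ j • x ≠ x) : ∃ a b : ℕ, a ≤ j ∧ j ≤ b ∧ b < r ∧
      (∀ x y : K, ∃ p ∈ par σ (Set.Icc a b), p • x = y) ∧
      2 * ((b - a) + 1) ≤ Nat.card K + Nat.card {x : K // σ j • x = x} ∧
      (∀ c ∈ outer a b r, ∀ x : K, σ c • x = x) ∧
      (outer a b r).card ≤ 2 * (ℓ / 2) ∧ 2 ^ (outer a b r).card ≤ ℓ.factorial := by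
  have : Nonempty K := ⟨x⟩
  obtain ⟨a, b, h1, h2, h3, h4, h5⟩ := h.exists_transitive_interval hj hx
  have hfix : ∀ c ∈ outer a b r, ∀ x : K, σ c • x = x := fun c hc =>
    h.outer_smul_eq hk hl hkl hr h3 h4 hc
  refine ⟨a, b, h1, h2, h3, h4, h5, hfix, ?_, ?_⟩
  · obtain ⟨T, hTC, hT2, hTs⟩ := exists_sparse_subset (outer a b r)
    have := h.card_le_half_of_fix h4 (T := T) (fun i hi => (mem_outer.1 (hTC hi)).1)
      (h.commute_outer h3 hTC) (fun i hi j hj => h.commute_of_apart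
        (mem_outer.1 (hTC hi)).1 (mem_outer.1 (hTC hj)).1 (hTs i hi j hj))
      fun i hi => hfix i (hTC hi)
    omega
  · refine (h.two_pow_le_card_par _ fun i hi => (mem_outer.1 hi).1).trans ?_
    exact h.card_le_factorial_of_fix (h.commute_outer h3 subset_rfl) h4 (b := x)
      fun a ha => smul_eq_of_mem_par hfix a ha _

lemma card_eq_of_three_le [Finite G] [Finite Ω] [Finite K] (h : IsBlockFamily σ r β ℓ)
    (hk : 3 ≤ Nat.card K) (hl : 2 ≤ ℓ) (hkl : 9 ≤ Nat.card K * ℓ) (hr : Nat.card K * ℓ ≤ r + 3) :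
    (Nat.card K = 3 ∧ ℓ = 3) ∨ (Nat.card K = 5 ∧ ℓ = 2) := by
  obtain ⟨j, hj, x, hx⟩ := h.exists_moving
  obtain ⟨a, b, h1, h2, h3, -, h5, -, h6, h7⟩ := h.interval_bounds hk hl hkl hr hj hx
  have h8 := le_add_card_outer r (h1.trans h2)
  have h9 := card_fixed_add_two_le hx
  generalize (outer a b r).card = C at *
  generalize Nat.card K = k at *
  rcases Nat.lt_or_ge ℓ 3 with hl3 | hl3
  · obtain rfl : ℓ = 2 := by omega
    have : C ≤ 1 := by
      refine (Nat.pow_le_pow_iff_right (a := 2) (by norm_num)).1 (h7.trans ?_)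
      decide
    omega
  · rcases Nat.lt_or_ge ℓ 4 with hl4 | hl4
    · obtain rfl : ℓ = 3 := by omega
      omega
    · exfalso
      have h10 : ℓ / 2 * 2 ≤ ℓ := Nat.div_mul_le_self _ _
      have h11 : 4 * k + 3 * ℓ ≤ k * ℓ + 12 := by nlinarith
      omega

end IsBlockFamily
end Bounds

lemma perm_eq_one_of_card_three {α : Type*} (hα : Nat.card α = 3) {g c d : Equiv.Perm α}
    (hgc : g * c = c * g) (hgd : g * d = d * g) (hcd : c * d ≠ d * c) : g = 1 := by
  have : Finite α := Nat.finite_of_card_ne_zero (by omega)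
  let e : Equiv.Perm α ≃* Equiv.Perm (Fin 3) := (Finite.equivFinOfCardEq hα).permCongrHom
  have key : ∀ g c d : Equiv.Perm (Fin 3), g * c = c * g → g * d = d * g → c * d ≠ d * c →
      g = 1 := by decide
  refine e.injective ((key (e g) (e c) (e d) ?_ ?_ fun h => hcd (e.injective ?_)).trans
    (map_one e).symm)
  · rw [← map_mul, ← map_mul, hgc]
  · rw [← map_mul, ← map_mul, hgd]
  · rw [map_mul, map_mul, h]

section ThreeThree
variable {G Ω K : Type*} [Group G] [MulAction G Ω] [MulAction G K]
  {σ : ℕ → G} {r : ℕ} {β : Ω → K}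

namespace IsBlockFamily

lemma false_of_noncommuting_pair [Finite G] [Finite Ω] [Finite K] (h : IsBlockFamily σ r β 3)
    (hk : Nat.card K = 3) {c d : ℕ} {D : Finset ℕ} (hD : D.card = 3) (hDr : ∀ i ∈ D, i < r)
    (hcD : ∀ i ∈ D, Commute (σ c) (σ i)) (hdD : ∀ i ∈ D, Commute (σ d) (σ i))
    (hc : ∀ x : K, σ c • x = x) (hd : ∀ x : K, σ d • x = x) (hcd : ¬ Commute (σ c) (σ d))
    (hP : ∀ x y : K, ∃ p ∈ par σ (D : Set ℕ), p • x = y) : False := by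
  have hc' := commute_par (J := (D : Set ℕ)) hcD
  have hd' := commute_par (J := (D : Set ℕ)) hdD
  have hinj : Function.Injective ((MulAction.toPermHom G K).comp (par σ (D : Set ℕ)).subtype) := by
    refine (injective_iff_map_eq_one _).2 fun g hg => Subtype.ext (h.faithful _ fun x => ?_)
    have hgK : ∀ y : K, (g : G) • y = y := fun y => Equiv.ext_iff.1 hg y
    let b := β x
    let := fiberAction h.map_smul (MulAction.stabilizer G b) b fun _ h => h
    let φ := MulAction.toPermHom (MulAction.stabilizer G b) {y // β y = b}
    have hval : ∀ (s : MulAction.stabilizer G b) (y : {y // β y = b}),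
        (φ s y).1 = (s : G) • y.1 := fun _ _ => rfl
    let g' : MulAction.stabilizer G b := ⟨g, hgK b⟩
    let c' : MulAction.stabilizer G b := ⟨σ c, hc b⟩
    let d' : MulAction.stabilizer G b := ⟨σ d, hd b⟩
    have h1 : φ g' = 1 := by
      refine perm_eq_one_of_card_three (h.card_fiber b) (c := φ c') (d := φ d') ?_ ?_ fun hcd' => ?_
      · rw [← map_mul, ← map_mul]
        exact congrArg φ (Subtype.ext (hc' g g.2).eq.symm)
      · rw [← map_mul, ← map_mul]
        exact congrArg φ (Subtype.ext (hd' g g.2).eq.symm)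
      · rw [← map_mul, ← map_mul] at hcd'
        have hw : (σ d * σ c)⁻¹ * (σ c * σ d) = 1 := by
          refine h.eq_one_of_fix_fiber (A := Subgroup.zpowers ((σ d * σ c)⁻¹ * (σ c * σ d)))
            (P := par σ (D : Set ℕ)) ?_ hP (Subgroup.mem_zpowers _) (b := b) fun y hy => ?_
          · rintro _ ⟨m, rfl⟩ p hp
            exact ((((hd' p hp).mul_left (hc' p hp)).inv_left).mul_left
              ((hc' p hp).mul_left (hd' p hp))).zpow_left m
          · have := congrArg Subtype.val (Equiv.ext_iff.1 hcd' ⟨y, hy⟩)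
            rw [hval, hval] at this
            rw [← smul_smul, inv_smul_eq_iff]
            exact this
        exact hcd (inv_mul_eq_one.1 hw).symm
    exact congrArg Subtype.val (Equiv.ext_iff.1 h1 ⟨x, rfl⟩)
  have h1 := h.two_pow_le_card_par D hDr
  have h2 := Nat.card_le_card_of_injective _ hinj
  rw [Nat.card_perm, hk] at h2
  rw [hD] at h1
  have := h1.trans h2
  revert this
  decide

lemma false_of_three_three [Finite G] [Finite Ω] [Finite K] (h : IsBlockFamily σ r β 3)
    (hk : Nat.card K = 3) (hr : 6 ≤ r) : False := by
  obtain ⟨j, hj, x, hx⟩ := h.exists_moving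
  have : Nonempty K := ⟨x⟩
  obtain ⟨a, b, h1, h2, h3, h4, h5, h6, h7, -⟩ := h.interval_bounds hk.ge (by norm_num)
    (by rw [hk]) (by rw [hk]; omega) hj hx
  have h8 := le_add_card_outer r (h1.trans h2)
  have h9 := card_fixed_add_two_le hx
  rw [hk] at h5 h9
  obtain rfl : r = 6 := by omega
  obtain rfl : b = a + 1 := by omega
  have hnc : ∀ c d, c ∈ outer a (a + 1) 6 → d ∈ outer a (a + 1) 6 → c ≠ d →
      ¬ Commute (σ c) (σ d) := fun c d hc hd hne hcom => by
    have hsub : ({c, d} : Finset ℕ) ⊆ outer a (a + 1) 6 := by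
      simp [Finset.insert_subset_iff, hc, hd]
    have := h.card_le_half_of_fix h4 (T := {c, d}) (fun i hi => (mem_outer.1 (hsub hi)).1)
      (h.commute_outer h3 hsub) ?_ fun i hi => h6 i (hsub hi)
    · rw [Finset.card_pair hne] at this
      omega
    · simp only [Finset.mem_insert, Finset.mem_singleton, forall_eq_or_imp, forall_eq]
      exact ⟨⟨Commute.refl _, hcom⟩, hcom.symm, Commute.refl _⟩
  have hfin : ∀ c d : ℕ, ∀ D : Finset ℕ, D.card = 3 → c ≠ d →
      c ∈ outer a (a + 1) 6 → d ∈ outer a (a + 1) 6 →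
      (∀ i ∈ D, i < 6 ∧ (c + 1 < i ∨ i + 1 < c) ∧ (d + 1 < i ∨ i + 1 < d)) →
      a ∈ D → a + 1 ∈ D → False := fun c d D hD hne hc hd hcd ha ha1 => by
    have hcr := (mem_outer.1 hc).1
    have hdr := (mem_outer.1 hd).1
    refine h.false_of_noncommuting_pair hk hD (fun i hi => (hcd i hi).1)
      (fun i hi => h.commute_of_apart hcr (hcd i hi).1 ?_)
      (fun i hi => h.commute_of_apart hdr (hcd i hi).1 ?_)
      (h6 c hc) (h6 d hd) (hnc c d hc hd hne) fun x y => ?_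
    · have := hcd i hi
      omega
    · have := hcd i hi
      omega
    · obtain ⟨p, hp, hpx⟩ := h4 x y
      refine ⟨p, par_mono σ (fun i hi => ?_) hp, hpx⟩
      have := Set.mem_Icc.1 hi
      have : i = a ∨ i = a + 1 := by omega
      rcases this with rfl | rfl
      · exact ha
      · exact ha1
  have ha : a ≤ 4 := by omega
  interval_cases a
  · exact absurd h7 (by decide)
  · exact hfin 4 5 {0, 1, 2} (by decide) (by decide) (by decide) (by decide) (by decide)
      (by decide) (by decide)
  · exact hnc 0 5 (by decide) (by decide) (by decide) (h.commute_of_apart (by decide) (by decide)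
      (by decide))
  · exact hfin 0 1 {3, 4, 5} (by decide) (by decide) (by decide) (by decide) (by decide)
      (by decide) (by decide)
  · exact absurd h7 (by decide)

end IsBlockFamily
end ThreeThree

section FiveTwo
variable {G Ω K : Type*} [Group G] [MulAction G Ω] [MulAction G K]
  {σ : ℕ → G} {r : ℕ} {β : Ω → K}

/-- The set of blocks not fixed pointwise by `g`. -/
def blockSupp (β : Ω → K) (g : G) : Set K := {b | ∃ x, β x = b ∧ g • x ≠ x}

namespace IsBlockFamily

lemma eq_or_eq_of_fiber_two (h : IsBlockFamily σ r β 2) {x y w : Ω} (hxy : β y = β x) (hne : y ≠ x)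
    (hw : β w = β x) : w = x ∨ w = y := by
  by_contra! hcon
  have hu := (Nat.card_eq_two_iff' (⟨x, rfl⟩ : {y // β y = β x})).1 (h.card_fiber (β x))
  have := hu.unique (y₁ := ⟨y, hxy⟩) (y₂ := ⟨w, hw⟩) (fun e => hne (congrArg Subtype.val e))
    fun e => hcon.1 (congrArg Subtype.val e)
  exact hcon.2 (congrArg Subtype.val this).symm

lemma mem_blockSupp_iff (h : IsBlockFamily σ r β 2) {g : G} (hg : ∀ b : K, g • b = b) (x : Ω) :
    β x ∈ blockSupp β g ↔ g • x ≠ x := by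
  refine ⟨fun ⟨y, hyx, hy⟩ hx => ?_, fun hx => ⟨x, rfl, hx⟩⟩
  have h1 : x ≠ y := fun e => hy (e ▸ hx)
  rcases h.eq_or_eq_of_fiber_two (w := g • y) hyx.symm h1 (by rw [h.map_smul, hg]) with h2 | h2
  · exact hy h2
  · rw [← hx] at h2
    exact h1.symm (smul_left_cancel g h2)

lemma mem_blockSupp_mul (h : IsBlockFamily σ r β 2) {g k : G} (hg : ∀ b : K, g • b = b)
    (hk : ∀ b : K, k • b = b) (b : K) :
    b ∈ blockSupp β (g * k) ↔ ¬ (b ∈ blockSupp β g ↔ b ∈ blockSupp β k) := by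
  have hgk : ∀ b : K, (g * k) • b = b := fun b => by rw [mul_smul, hk, hg]
  have hne : Nonempty {x // β x = b} := by
    have := Nat.card_pos_iff.1 ((h.card_fiber b).symm ▸ (by norm_num : 0 < 2))
    exact this.1
  obtain ⟨x, rfl⟩ := hne
  have hgx : β (g • x) = β x := by rw [h.map_smul, hg]
  have hkx : β (k • x) = β x := by rw [h.map_smul, hk]
  have hgkx : β (g • k • x) = β x := by rw [h.map_smul, h.map_smul, hk, hg]
  rw [h.mem_blockSupp_iff hgk, h.mem_blockSupp_iff hg, h.mem_blockSupp_iff hk, mul_smul]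
  by_cases h1 : k • x = x
  · simp [h1]
  · by_cases h2 : g • x = x
    · have : g • k • x ≠ x := fun e => h1 (smul_left_cancel g (e.trans h2.symm))
      simp [h1, h2, this]
    · have : g • k • x = x := by
        rcases h.eq_or_eq_of_fiber_two hgx h2 hgkx with e | e
        · exact e
        · exact absurd (smul_left_cancel g e) h1
      simp [h1, h2, this]

lemma mem_blockSupp_conj (h : IsBlockFamily σ r β 2) (g k : G) (b : K) :
    k • b ∈ blockSupp β (k * g * k⁻¹) ↔ b ∈ blockSupp β g := by
  constructor
  · rintro ⟨x, hx, hgx⟩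
    refine ⟨k⁻¹ • x, by rw [h.map_smul, hx, inv_smul_smul], fun e => hgx ?_⟩
    rw [mul_smul, mul_smul, e, smul_inv_smul]
  · rintro ⟨x, hx, hgx⟩
    refine ⟨k • x, by rw [h.map_smul, hx], fun e => hgx ?_⟩
    rw [mul_smul, mul_smul, inv_smul_smul] at e
    exact smul_left_cancel k e

lemma eq_of_blockSupp_eq (h : IsBlockFamily σ r β 2) {g k : G} (hg : ∀ b : K, g • b = b)
    (hk : ∀ b : K, k • b = b) (hs : blockSupp β g = blockSupp β k) : g = k := by
  have hk' : ∀ b : K, k⁻¹ • b = b := fun b => by rw [inv_smul_eq_iff, hk]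
  have h0 : ∀ b, b ∉ blockSupp β (k⁻¹ * k) := fun b hb => by
    rw [inv_mul_cancel] at hb
    obtain ⟨x, -, hx⟩ := hb
    exact hx (one_smul G x)
  refine (inv_mul_eq_one.1 (h.faithful _ fun x => ?_)).symm
  by_contra hx
  have h1 : β x ∈ blockSupp β (k⁻¹ * g) := ⟨x, rfl, hx⟩
  rw [h.mem_blockSupp_mul hk' hg, hs, ← h.mem_blockSupp_mul hk' hk] at h1
  exact h0 _ h1

lemma exists_blockSupp_eq_of_even (h : IsBlockFamily σ r β 2) (W : Subgroup G)
    (hW : ∀ b c : K, b ≠ c → ∃ w ∈ W, (∀ d : K, w • d = d) ∧ blockSupp β w = {b, c})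
    (S : Finset K) (hS : Even S.card) :
    ∃ w ∈ W, (∀ d : K, w • d = d) ∧ blockSupp β w = (S : Set K) := by
  classical
  induction S using Finset.strongInduction with
  | H S ih =>
    rcases S.eq_empty_or_nonempty with rfl | ⟨b, hb⟩
    · refine ⟨1, W.one_mem, fun d => one_smul G d, ?_⟩
      ext d
      simp [blockSupp]
    · have h1 : (S.erase b).Nonempty := by
        rw [← Finset.card_pos, Finset.card_erase_of_mem hb]
        have := Finset.card_pos.2 ⟨b, hb⟩
        obtain ⟨t, ht⟩ := hS
        omega
      obtain ⟨c, hc⟩ := h1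
      have hcS := Finset.mem_of_mem_erase hc
      have hcb := Finset.ne_of_mem_erase hc
      obtain ⟨w, hwW, hwK, hw⟩ := ih ((S.erase b).erase c)
        ((Finset.erase_subset _ _).trans_ssubset (Finset.erase_ssubset hb)) (by
          rw [Finset.card_erase_of_mem hc, Finset.card_erase_of_mem hb]
          obtain ⟨t, ht⟩ := hS
          exact ⟨t - 1, by omega⟩)
      obtain ⟨v, hvW, hvK, hv⟩ := hW b c hcb.symm
      refine ⟨w * v, W.mul_mem hwW hvW, fun d => by rw [mul_smul, hvK, hwK], ?_⟩
      ext d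
      rw [h.mem_blockSupp_mul hwK hvK, hw, hv]
      simp only [Finset.coe_erase, Set.mem_sdiff, Finset.mem_coe, Set.mem_singleton_iff,
        Set.mem_insert_iff]
      by_cases hdb : d = b
      · subst hdb; simp [hb]
      · by_cases hdc : d = c
        · subst hdc; simp [hcS]
        · simp [hdb, hdc]

lemma exists_smul_blockSupp [Finite K] (h : IsBlockFamily σ r β 2) (hk : 3 ≤ Nat.card K)
    (S : Set K) {s t : K} (hs : s ∈ S) (ht : t ∉ S) :
    ∃ i < r, ∃ b : K, ¬ (σ i • b ∈ S ↔ b ∈ S) := by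
  classical
  by_contra! hcon
  let e : Setoid K := Setoid.comap (· ∈ S) ⊥
  have he : ∀ b c, e b c ↔ (b ∈ S ↔ c ∈ S) := fun b c =>
    ⟨fun hbc => iff_of_eq hbc, fun hbc => propext hbc⟩
  rcases h.prim e fun i hi b c hbc => by
    rw [he] at hbc ⊢
    rw [hcon i hi, hcon i hi, hbc] with h1 | h1
  · have : Nat.card K ≤ Nat.card Prop := by
      refine Nat.card_le_card_of_injective (· ∈ S) fun b c hbc => ?_
      have : e b c := hbc
      rwa [h1] at this
    rw [Nat.card_eq_fintype_card (α := Prop), Fintype.card_prop] at this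
    omega
  · have : e s t := by rw [h1]; trivial
    exact ht (((he s t).1 this).1 hs)

lemma false_of_five_two_aux [Finite K] (h : IsBlockFamily σ r β 2)
    (hk : Nat.card K = 5) {z u v : ℕ} (hz : z < r) (hu : u < r) (hv : v < r) (huz : u ≠ z)
    (hvz : v ≠ z) (hvu : v ≠ u) (hzK : ∀ b : K, σ z • b = b) (huK : ∀ b : K, σ u • b = b)
    (hvK : ∀ b : K, σ v • b = b) (hfree : ∀ x : Ω, σ z • x ≠ x)
    (htr : ∀ i < r, ∀ b c : K, σ i • b ≠ b → c ≠ b → c ≠ σ i • b → σ i • c = c) : False := by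
  classical
  have := Fintype.ofFinite K
  let W := par σ {i | i < r ∧ i ≠ v}
  have hWm : ∀ i < r, i ≠ v → σ i ∈ W := fun i hi hiv => mem_par ⟨hi, hiv⟩
  have hzs : ∀ b : K, b ∈ blockSupp β (σ z) := fun b => by
    have := (Nat.card_pos_iff.1 ((h.card_fiber b).symm ▸ (by norm_num : 0 < 2))).1
    obtain ⟨x, hx⟩ := this
    exact ⟨x, hx, hfree x⟩
  have hsub : {i | i < r ∧ i ≠ v} ⊆ Set.Iio r := fun i hi => hi.1
  -- the block support of `σ u` is a proper nonempty set
  obtain ⟨s, hs⟩ : ∃ s, s ∈ blockSupp β (σ u) := by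
    by_contra! hcon
    refine h.ne u hu (h.eq_of_blockSupp_eq huK (fun b => one_smul G b) ?_)
    ext b
    simp only [hcon b, false_iff]
    simp [blockSupp]
  obtain ⟨t, ht⟩ : ∃ t, t ∉ blockSupp β (σ u) := by
    by_contra! hcon
    have heq : σ u = σ z := h.eq_of_blockSupp_eq huK hzK (by ext b; simp [hcon b, hzs b])
    refine h.notMem_par hu (J := {z}) (by simpa using hz) (by simpa using huz) ?_
    rw [heq]
    exact mem_par rfl
  obtain ⟨i, hi, b, hib⟩ := h.exists_smul_blockSupp (by omega) _ hs ht
  have hbi : σ i • b ≠ b := fun e => hib (by rw [e])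
  have hiv : i ≠ v := fun e => hbi (e ▸ hvK b)
  -- a commutator supported on exactly two blocks
  have hpair : ∃ w ∈ W, (∀ d : K, w • d = d) ∧ blockSupp β w = {b, σ i • b} := by
    have hcK : ∀ d : K, (σ i * σ u * (σ i)⁻¹) • d = d := fun d => by
      rw [mul_smul, mul_smul, huK, smul_inv_smul]
    have hiW := hWm i hi hiv
    have huW := hWm u hu hvu.symm
    have hii : ∀ d : K, σ i • σ i • d = d := fun d => by rw [smul_smul, h.sq i hi, one_smul]
    have hcs : ∀ d : K, d ∈ blockSupp β (σ i * σ u * (σ i)⁻¹) ↔ σ i • d ∈ blockSupp β (σ u) :=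
      fun d => by
        have := h.mem_blockSupp_conj (σ u) (σ i) (σ i • d)
        rwa [hii] at this
    refine ⟨σ u * (σ i * σ u * (σ i)⁻¹), W.mul_mem huW (W.mul_mem (W.mul_mem hiW huW)
      (W.inv_mem hiW)), fun d => by rw [mul_smul, hcK, huK], ?_⟩
    ext d
    rw [h.mem_blockSupp_mul huK hcK, hcs]
    simp only [Set.mem_insert_iff, Set.mem_singleton_iff]
    by_cases h1 : d = b
    · subst h1
      tauto
    · by_cases h2 : d = σ i • b
      · subst h2
        rw [hii]
        tauto
      · rw [htr i hi b d hbi h1 h2]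
        tauto
  -- the relation of forming the support of an element of `W` is everything
  let e : Setoid K :=
    { r := fun b c => b = c ∨ ∃ w ∈ W, (∀ d : K, w • d = d) ∧ blockSupp β w = {b, c}
      iseqv :=
        { refl := fun b => Or.inl rfl
          symm := by
            rintro b c (rfl | ⟨w, hw, hwK, hws⟩)
            · exact Or.inl rfl
            · exact Or.inr ⟨w, hw, hwK, by rw [hws, Set.pair_comm]⟩
          trans := by
            rintro b c d (rfl | ⟨w, hw, hwK, hws⟩) (rfl | ⟨w', hw', hwK', hws'⟩)
            · exact Or.inl rfl
            · exact Or.inr ⟨w', hw', hwK', hws'⟩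
            · exact Or.inr ⟨w, hw, hwK, hws⟩
            · by_cases hbd : b = d
              · exact Or.inl hbd
              by_cases hbc : b = c
              · exact Or.inr ⟨w', hw', hwK', by rw [hbc, hws']⟩
              by_cases hcd : c = d
              · exact Or.inr ⟨w, hw, hwK, by rw [← hcd, hws]⟩
              refine Or.inr ⟨w * w', W.mul_mem hw hw', fun d => by rw [mul_smul, hwK', hwK], ?_⟩
              ext y
              rw [h.mem_blockSupp_mul hwK hwK', hws, hws']
              simp only [Set.mem_insert_iff, Set.mem_singleton_iff]
              grind } }
  have hetop : e = ⊤ := by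
    refine (h.prim e fun j hj x y hxy => ?_).resolve_left fun hbot => ?_
    · by_cases hjv : j = v
      · rw [hjv, hvK, hvK]
        exact hxy
      rcases hxy with rfl | ⟨w, hw, hwK, hws⟩
      · exact Or.inl rfl
      refine Or.inr ⟨σ j * w * (σ j)⁻¹, W.mul_mem (W.mul_mem (hWm j hj hjv) hw)
        (W.inv_mem (hWm j hj hjv)), fun d => by rw [mul_smul, mul_smul, hwK, smul_inv_smul], ?_⟩
      ext d
      obtain ⟨d, rfl⟩ : ∃ d', σ j • d' = d := ⟨(σ j)⁻¹ • d, smul_inv_smul _ _⟩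
      rw [h.mem_blockSupp_conj, hws]
      simp
    · have : e b (σ i • b) := Or.inr hpair
      rw [hbot] at this
      exact hbi this.symm
  have hW := h.exists_blockSupp_eq_of_even W fun b c hbc => by
    have : e b c := by rw [hetop]; trivial
    exact this.resolve_left hbc
  refine h.notMem_par hv hsub (fun hmem => hmem.2 rfl) ?_
  by_cases hev : Even (blockSupp β (σ v)).toFinset.card
  · obtain ⟨w, hw, hwK, hws⟩ := hW _ hev
    rw [h.eq_of_blockSupp_eq hvK hwK (by rw [hws, Set.coe_toFinset])]
    exact hw
  · obtain ⟨w, hw, hwK, hws⟩ := hW (blockSupp β (σ v)).toFinsetᶜ (by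
      rw [Finset.card_compl, ← Nat.card_eq_fintype_card, hk]
      have h1 := Finset.card_le_univ (blockSupp β (σ v)).toFinset
      rw [← Nat.card_eq_fintype_card, hk] at h1
      rw [Nat.even_sub h1]
      simp only [hev, iff_false]
      decide)
    have hvz' : σ v = w * σ z := by
      refine h.eq_of_blockSupp_eq hvK (fun b => by rw [mul_smul, hzK, hwK]) ?_
      ext d
      rw [h.mem_blockSupp_mul hwK hzK, hws]
      simp [hzs d]
    rw [hvz']
    exact W.mul_mem hw (hWm z hz hvz.symm)

lemma smul_ne_of_commute_transitive (h : IsBlockFamily σ r β 2) {z : ℕ} (hz : z < r)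
    (hzK : ∀ b : K, σ z • b = b) {P : Subgroup G}
    (hPA : ∀ a ∈ par σ ({z} : Set ℕ), ∀ p ∈ P, Commute a p)
    (hP : ∀ b c : K, ∃ p ∈ P, p • b = c) (x : Ω) : σ z • x ≠ x := fun hx => by
  refine h.ne z hz (h.eq_one_of_fix_fiber hPA hP (mem_par rfl) (b := β x) fun y hy => ?_)
  by_contra hne
  exact (h.mem_blockSupp_iff hzK x).1 (hy ▸ (h.mem_blockSupp_iff hzK y).2 hne) hx

lemma five_two_cases [Finite G] [Finite Ω] [Finite K] (h : IsBlockFamily σ r β 2)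
    (hk : Nat.card K = 5) (hr : 7 ≤ r) {j : ℕ} (hj : j < r) {x : K} (hx : σ j • x ≠ x) :
    r = 7 ∧ Nat.card {x : K // σ j • x = x} = 3 ∧
      ((2 ≤ j ∧ j ≤ 5 ∧ (∀ b : K, σ 0 • b = b) ∧ ∀ x : Ω, σ 0 • x ≠ x) ∨
        (1 ≤ j ∧ j ≤ 4 ∧ (∀ b : K, σ 6 • b = b) ∧ ∀ x : Ω, σ 6 • x ≠ x)) := by
  obtain ⟨a, b, h1, h2, h3, h4, h5, h6, -, h7⟩ := h.interval_bounds (by omega) le_rfl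
    (by rw [hk]; norm_num) (by rw [hk]; omega) hj hx
  have h8 := le_add_card_outer r (h1.trans h2)
  have h9 := card_fixed_add_two_le hx
  have h10 : (outer a b r).card ≤ 1 := by
    refine (Nat.pow_le_pow_iff_right (a := 2) (by norm_num)).1 (h7.trans ?_)
    decide
  rw [hk] at h5 h9
  obtain rfl : r = 7 := by omega
  obtain rfl : b = a + 3 := by omega
  refine ⟨rfl, by omega, ?_⟩
  have hfree : ∀ z ∈ outer a (a + 3) 7, ∀ x : Ω, σ z • x ≠ x := fun z hz =>
    h.smul_ne_of_commute_transitive (mem_outer.1 hz).1 (h6 z hz)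
      (by simpa using h.commute_outer h3 (T := {z}) (by simpa using hz)) h4
  have ha : a ≤ 3 := by omega
  interval_cases a
  · exact absurd h10 (by decide)
  · exact Or.inr ⟨h1, h2, h6 6 (by decide), hfree 6 (by decide)⟩
  · exact Or.inl ⟨h1, h2, h6 0 (by decide), hfree 0 (by decide)⟩
  · exact absurd h10 (by decide)

lemma false_of_five_two [Finite G] [Finite Ω] [Finite K] (h : IsBlockFamily σ r β 2)
    (hk : Nat.card K = 5) (hr : 7 ≤ r) : False := by
  classical
  have htr : ∀ i < r, ∀ b c : K, σ i • b ≠ b → c ≠ b → c ≠ σ i • b → σ i • c = c := by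
    intro i hi b c hb hcb hcb'
    by_contra hc
    have := Fintype.ofFinite K
    have h1 : (Finset.univ.filter fun y : K => σ i • y = y) ⊆
        Finset.univ \ {c, b, σ i • b} := fun y hy => by
      have hy := (Finset.mem_filter.1 hy).2
      simp only [Finset.mem_sdiff, Finset.mem_univ, Finset.mem_insert, Finset.mem_singleton,
        true_and, not_or]
      refine ⟨fun e => hc (e ▸ hy), fun e => hb (e ▸ hy), fun e => hb ?_⟩
      rw [e] at hy
      exact smul_left_cancel _ hy
    have h2 := Finset.card_le_card h1
    have h3 : ({c, b, σ i • b} : Finset K).card = 3 :=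
      Finset.card_eq_three.2 ⟨_, _, _, hcb, hcb', hb.symm, rfl⟩
    have h4 := (h.five_two_cases hk hr hi hb).2.1
    rw [Nat.card_eq_fintype_card, Fintype.card_subtype] at h4
    rw [Finset.card_sdiff_of_subset (Finset.subset_univ _), h3, h4, Finset.card_univ,
      ← Nat.card_eq_fintype_card, hk] at h2
    omega
  obtain ⟨j, hj, x, hx⟩ := h.exists_moving
  obtain ⟨rfl, -, hcase⟩ := h.five_two_cases hk hr hj hx
  have hnot : (∀ b : K, σ 0 • b = b) → (∀ x : Ω, σ 0 • x ≠ x) → (∀ b : K, σ 6 • b = b) →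
      (∀ x : Ω, σ 6 • x ≠ x) → False := fun h0 h0' h6 h6' => by
    refine h.notMem_par (i := 0) (by norm_num) (J := {6}) (by simp) (by simp) ?_
    have : σ 0 = σ 6 := h.eq_of_blockSupp_eq h0 h6 (by
      ext b
      exact ⟨fun ⟨x, hx, _⟩ => ⟨x, hx, h6' x⟩, fun ⟨x, hx, _⟩ => ⟨x, hx, h0' x⟩⟩)
    rw [this]
    exact mem_par rfl
  rcases hcase with ⟨-, -, hK, hfree⟩ | ⟨-, -, hK, hfree⟩
  · have hmov : ∀ i < 7, i < 2 ∨ 5 < i → ∀ b : K, σ i • b = b := fun i hi hi' b => by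
      by_contra hb
      rcases (h.five_two_cases hk hr hi hb).2.2 with h1 | h1
      · omega
      · exact hnot hK hfree h1.2.2.1 h1.2.2.2
    exact h.false_of_five_two_aux hk (z := 0) (u := 1) (v := 6) (by norm_num) (by norm_num)
      (by norm_num) (by norm_num) (by norm_num) (by norm_num) hK (hmov 1 (by norm_num) (by norm_num))
      (hmov 6 (by norm_num) (by norm_num)) hfree htr
  · have hmov : ∀ i < 7, i < 1 ∨ 4 < i → ∀ b : K, σ i • b = b := fun i hi hi' b => by
      by_contra hb
      rcases (h.five_two_cases hk hr hi hb).2.2 with h1 | h1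
      · exact hnot h1.2.2.1 h1.2.2.2 hK hfree
      · omega
    exact h.false_of_five_two_aux hk (z := 6) (u := 5) (v := 0) (by norm_num) (by norm_num)
      (by norm_num) (by norm_num) (by norm_num) (by norm_num) hK (hmov 5 (by norm_num) (by norm_num))
      (hmov 0 (by norm_num) (by norm_num)) hfree htr

end IsBlockFamily
end FiveTwo

lemma commute_closure {G : Type*} [Group G] {s : Set G} {g : G} (h : ∀ a ∈ s, Commute g a) :
    ∀ a ∈ Subgroup.closure s, Commute g a := by
  have : Subgroup.closure s ≤ Subgroup.centralizer {g} := (Subgroup.closure_le _).2 fun a ha =>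
    Subgroup.mem_centralizer_singleton_iff.2 (h a ha).eq.symm
  intro a ha
  exact (Subgroup.mem_centralizer_singleton_iff.1 (this ha)).symm

lemma card_mul_card_le_of_disjoint {G : Type*} [Group G] [Finite G] {A B C : Subgroup G}
    (hAB : Disjoint A B) (hA : A ≤ C) (hB : B ≤ C) :
    Nat.card A * Nat.card B ≤ Nat.card C := by
  rw [← Nat.card_prod]
  refine Nat.card_le_card_of_injective
    (fun p : A × B => (⟨p.1 * p.2, C.mul_mem (hA p.1.2) (hB p.2.2)⟩ : C)) fun p q hpq => ?_
  exact Subgroup.mul_injective_of_disjoint hAB (congrArg Subtype.val hpq)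

lemma three_le_orderOf_mul {G : Type*} [Group G] [Finite G] {s t : G} (hs : s * s = 1)
    (ht : t * t = 1) (hst : ¬ Commute s t) : 3 ≤ orderOf (s * t) := by
  have hsi : s⁻¹ = s := inv_eq_of_mul_eq_one_left hs
  have hti : t⁻¹ = t := inv_eq_of_mul_eq_one_left ht
  have h0 := orderOf_pos (s * t)
  have key : (s * t) ^ 2 ≠ 1 := fun e => hst <| by
    rw [pow_two] at e
    have := inv_eq_of_mul_eq_one_left e
    rw [mul_inv_rev, hsi, hti] at this
    exact this.symm
  have h1 : orderOf (s * t) ≠ 1 := fun e => key (by rw [orderOf_eq_one_iff.1 e, one_pow])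
  have h2 : orderOf (s * t) ≠ 2 := fun e => key (e ▸ pow_orderOf_eq_one _)
  omega

section TwoBlocks
variable {G Ω K : Type*} [Group G] [MulAction G Ω] [MulAction G K]
  {σ : ℕ → G} {r : ℕ} {β : Ω → K} {ℓ : ℕ}

lemma IsStringFamily.mem_par_singleton (h : IsStringFamily σ r) {i : ℕ} (hi : i < r) {g : G}
    (hg : g ∈ par σ {i}) : g = 1 ∨ g = σ i := by
  rw [par, Set.image_singleton, Subgroup.mem_closure_singleton] at hg
  obtain ⟨m, rfl⟩ := hg
  have h2 : σ i ^ (2 : ℤ) = 1 := by rw [zpow_two, h.sq i hi]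
  rcases Int.even_or_odd' m with ⟨c, rfl | rfl⟩
  · exact Or.inl (by rw [zpow_mul, h2, one_zpow])
  · exact Or.inr (by rw [zpow_add, zpow_mul, h2, one_zpow, zpow_one, one_mul])

lemma IsStringFamily.disjoint_par (h : IsStringFamily σ r) {I J : Set ℕ} (hI : I ⊆ Set.Iio r)
    (hJ : J ⊆ Set.Iio r) (hIJ : Disjoint I J) : Disjoint (par σ I) (par σ J) := by
  rw [disjoint_iff_inf_le]
  refine (h.ip I J hI hJ).trans ?_
  rw [Set.disjoint_iff_inter_eq_empty.1 hIJ, par_empty]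

/-- Distinct indices in the set are at distance at least two. -/
abbrev IsSparse (T : Finset ℕ) : Prop := ∀ i ∈ T, ∀ j ∈ T, i + 1 < j ∨ j + 1 < i ∨ i = j

/-- Every index of the first set is at distance at least two from every index of the second. -/
abbrev IsApart (S T : Finset ℕ) : Prop := ∀ i ∈ S, ∀ j ∈ T, i + 1 < j ∨ j + 1 < i

namespace IsBlockFamily

lemma commute_of_isApart (h : IsBlockFamily σ r β ℓ) {S T : Finset ℕ} (hS : ∀ i ∈ S, i < r)
    (hT : ∀ i ∈ T, i < r) (hST : IsApart S T) : ∀ i ∈ S, ∀ j ∈ T, Commute (σ i) (σ j) :=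
  fun i hi j hj => h.commute_of_apart (hS i hi) (hT j hj) (by have := hST i hi j hj; omega)

lemma transitive_of_moving [Finite K] (hk : Nat.card K = 2) {j : ℕ} {x : K} (hx : σ j • x ≠ x) :
    ∀ b c : K, ∃ p ∈ par σ (({j} : Finset ℕ) : Set ℕ), p • b = c := by
  have hmem : σ j ∈ par σ (({j} : Finset ℕ) : Set ℕ) := mem_par (by simp)
  intro b c
  by_cases hbc : b = c
  · exact ⟨1, one_mem _, by rw [one_smul, hbc]⟩
  · refine ⟨σ j, hmem, ?_⟩
    have hu := (Nat.card_eq_two_iff' b).1 hk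
    have hb : σ j • b ≠ b := fun e => by
      by_cases hxb : x = b
      · exact hx (hxb ▸ e)
      · have h1 : σ j • x ≠ b := fun e' => hxb (smul_left_cancel (σ j) (e'.trans e.symm))
        exact hx (hu.unique h1 hxb)
    exact hu.unique hb (Ne.symm hbc)

lemma card_le_half_of_moving [Finite G] [Finite Ω] [Finite K] (h : IsBlockFamily σ r β ℓ)
    (hk : Nat.card K = 2) {j : ℕ} (hj : j < r) {x : K} (hx : σ j • x ≠ x) {T : Finset ℕ}
    (hT : ∀ i ∈ T, i < r) (hTj : IsApart T {j}) (hTc : ∀ i ∈ T, ∀ k ∈ T, Commute (σ i) (σ k)) :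
    T.card ≤ ℓ / 2 := by
  have : Nonempty K := ⟨x⟩
  have hjT : j ∉ T := fun hm => by
    have := hTj j hm j (by simp)
    omega
  have hcj : ∀ i ∈ T, Commute (σ i) (σ j) := fun i hi =>
    h.commute_of_isApart hT (by simpa using hj) hTj i hi j (by simp)
  have h1 := h.two_pow_card_le (transitive_of_moving hk hx) (T := insert j T)
    (by simpa [hj] using hT) (commute_par_par ?_) ?_
  · rw [Finset.card_insert_of_notMem hjT, hk, pow_succ'] at h1
    exact (Nat.pow_le_pow_iff_right (a := 2) (by norm_num)).1
      (Nat.le_of_mul_le_mul_left h1 (by norm_num))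
  · intro i hi k hk
    simp only [Finset.coe_insert, Set.mem_insert_iff, Finset.mem_coe, Finset.coe_singleton,
      Set.mem_singleton_iff] at hi hk
    rcases hi with rfl | hi
    · rw [hk]
    · rw [hk]
      exact hcj i hi
  · intro i hi k hk
    rcases Finset.mem_insert.1 hi with rfl | hi' <;> rcases Finset.mem_insert.1 hk with rfl | hk'
    · exact Commute.refl _
    · exact (hcj k hk').symm
    · exact hcj i hi'
    · exact hTc i hi' k hk'

lemma two_block_cases [Finite G] [Finite Ω] [Finite K] (h : IsBlockFamily σ r β ℓ)
    (hk : Nat.card K = 2) (hl : 5 ≤ ℓ) (hr : 2 * ℓ ≤ r + 3) {j : ℕ} (hj : j < r) {x : K}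
    (hx : σ j • x ≠ x) : ((ℓ = 5 ∧ r = 7) ∨ (ℓ = 6 ∧ r = 9)) ∧ j % 2 = 1 := by
  classical
  let T₁ := (Finset.range (j / 2)).image fun i => 2 * i
  let T₂ := (Finset.range ((r - 1 - j) / 2)).image fun i => r - 1 - 2 * i
  have h1 : ∀ i ∈ T₁, i % 2 = 0 ∧ i + 1 < j := fun i hi => by
    obtain ⟨m, hm, rfl⟩ := Finset.mem_image.1 hi
    have := Finset.mem_range.1 hm
    omega
  have h2 : ∀ i ∈ T₂, (r - 1 - i) % 2 = 0 ∧ j + 1 < i ∧ i < r := fun i hi => by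
    obtain ⟨m, hm, rfl⟩ := Finset.mem_image.1 hi
    have := Finset.mem_range.1 hm
    omega
  have hc1 : T₁.card = j / 2 := by
    rw [Finset.card_image_of_injective _ fun a b hab => by simpa using hab, Finset.card_range]
  have hc2 : T₂.card = (r - 1 - j) / 2 := by
    rw [Finset.card_image_of_injOn, Finset.card_range]
    intro a ha b hb hab
    have ha := Finset.mem_range.1 ha
    have hb := Finset.mem_range.1 hb
    simp only at hab
    omega
  have hdis : Disjoint T₁ T₂ := Finset.disjoint_left.2 fun i hi hi' => by
    have := h1 i hi
    have := h2 i hi'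
    omega
  have hT : ∀ i ∈ T₁ ∪ T₂, (i % 2 = 0 ∧ i + 1 < j) ∨ ((r - 1 - i) % 2 = 0 ∧ j + 1 < i ∧ i < r) :=
    fun i hi => (Finset.mem_union.1 hi).imp (h1 i) (h2 i)
  have hTr : ∀ i ∈ T₁ ∪ T₂, i < r := fun i hi => by
    have := hT i hi
    omega
  have h3 := h.card_le_half_of_moving hk hj hx (T := T₁ ∪ T₂) hTr (fun i hi k hk => by
      have := hT i hi
      rw [Finset.mem_singleton.1 hk]
      omega) fun i hi k hk => h.commute_of_apart (hTr i hi) (hTr k hk) (by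
        have := hT i hi
        have := hT k hk
        omega)
  rw [Finset.card_union_of_disjoint hdis, hc1, hc2] at h3
  omega

lemma card_cube_le_of_noncommuting_pairs [Finite G] [Finite Ω] [Finite K]
    (h : IsBlockFamily σ r β ℓ) (hk : Nat.card K = 2) {j : ℕ} {x : K} (hx : σ j • x ≠ x)
    {c c' d d' : ℕ} {T : Finset ℕ} (hjT : j ∈ T) (hr : ∀ i ∈ {c, c'} ∪ {d, d'} ∪ T, i < r)
    (hcd : IsApart {c, c'} {d, d'}) (hcT : IsApart {c, c'} T) (hdT : IsApart {d, d'} T)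
    (hT : IsSparse T) (hc : ¬ Commute (σ c) (σ c')) (hd : ¬ Commute (σ d) (σ d')) :
    (9 * 2 ^ T.card) ^ 3 ≤ 8 * 3 ^ ℓ := by
  have hcr : ∀ i ∈ ({c, c'} : Finset ℕ), i < r := fun i hi => hr i (by
    rw [Finset.mem_union, Finset.mem_union]; exact Or.inl (Or.inl hi))
  have hdr : ∀ i ∈ ({d, d'} : Finset ℕ), i < r := fun i hi => hr i (by
    rw [Finset.mem_union, Finset.mem_union]; exact Or.inl (Or.inr hi))
  have hTr : ∀ i ∈ T, i < r := fun i hi => hr i (Finset.mem_union_right _ hi)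
  have hcdc := h.commute_of_isApart hcr hdr hcd
  have hcTc := h.commute_of_isApart hcr hTr hcT
  have hdTc := h.commute_of_isApart hdr hTr hdT
  have hTc : ∀ i ∈ T, ∀ k ∈ T, Commute (σ i) (σ k) := fun i hi k hk =>
    h.commute_of_apart (hTr i hi) (hTr k hk) (hT i hi k hk)
  have hx3 := three_le_orderOf_mul (h.sq c (hcr c (by simp))) (h.sq c' (hcr c' (by simp))) hc
  have hy3 := three_le_orderOf_mul (h.sq d (hdr d (by simp))) (h.sq d' (hdr d' (by simp))) hd
  have hxy : Commute (σ c * σ c') (σ d * σ d') :=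
    ((hcdc c (by simp) d (by simp)).mul_right (hcdc c (by simp) d' (by simp))).mul_left
      ((hcdc c' (by simp) d (by simp)).mul_right (hcdc c' (by simp) d' (by simp)))
  have hxT : ∀ i ∈ T, Commute (σ c * σ c') (σ i) := fun i hi =>
    (hcTc c (by simp) i hi).mul_left (hcTc c' (by simp) i hi)
  have hyT : ∀ i ∈ T, Commute (σ d * σ d') (σ i) := fun i hi =>
    (hdTc d (by simp) i hi).mul_left (hdTc d' (by simp) i hi)
  let A := Subgroup.closure ({σ c * σ c', σ d * σ d'} ∪ σ '' (T : Set ℕ))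
  have hAc : ∀ a ∈ A, ∀ b ∈ A, Commute a b := fun a ha => commute_closure fun b hb => by
    refine (commute_closure (fun a ha => ?_) a ha).symm
    rcases hb with (rfl | rfl) | ⟨k, hk, rfl⟩ <;> rcases ha with (rfl | rfl) | ⟨i, hi, rfl⟩
    · exact Commute.refl _
    · exact hxy
    · exact hxT i hi
    · exact hxy.symm
    · exact Commute.refl _
    · exact hyT i hi
    · exact (hxT k hk).symm
    · exact (hyT k hk).symm
    · exact hTc k hk i hi
  have hxA : σ c * σ c' ∈ A := Subgroup.subset_closure (by simp)
  have hyA : σ d * σ d' ∈ A := Subgroup.subset_closure (by simp)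
  have hTA : par σ (T : Set ℕ) ≤ A := Subgroup.closure_mono Set.subset_union_right
  have hxI : σ c * σ c' ∈ par σ (({c, c'} : Finset ℕ) : Set ℕ) :=
    mul_mem (mem_par (by simp)) (mem_par (by simp))
  have hyI : σ d * σ d' ∈ par σ (({d, d'} : Finset ℕ) : Set ℕ) :=
    mul_mem (mem_par (by simp)) (mem_par (by simp))
  have hapart : ∀ {S S' : Finset ℕ}, IsApart S S' → Disjoint (S : Set ℕ) S' := fun hS =>
    Set.disjoint_left.2 fun i hi hi' => by
      have := hS i hi i hi'
      omega
  have hcard : 3 * (3 * 2 ^ T.card) ≤ Nat.card A := by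
    have h1 := card_mul_card_le_of_disjoint (A := Subgroup.zpowers (σ d * σ d'))
      (B := par σ (T : Set ℕ)) (C := A ⊓ par σ (({d, d'} : Finset ℕ) ∪ T : Set ℕ))
      ((h.disjoint_par hdr hTr (hapart hdT)).mono_left (by simpa using hyI))
      (by
        rw [Subgroup.zpowers_le]
        exact ⟨hyA, par_mono σ Set.subset_union_left hyI⟩)
      (le_inf hTA (par_mono σ Set.subset_union_right))
    have h2 := card_mul_card_le_of_disjoint (A := Subgroup.zpowers (σ c * σ c'))
      (B := A ⊓ par σ (({d, d'} : Finset ℕ) ∪ T : Set ℕ)) (C := A)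
      ((h.disjoint_par hcr (Set.union_subset hdr hTr)
        (Set.disjoint_union_right.2 ⟨hapart hcd, hapart hcT⟩)).mono
          (by simpa using hxI) inf_le_right)
      (by simpa using hxA) inf_le_left
    rw [Nat.card_zpowers] at h1 h2
    exact (Nat.mul_le_mul hx3 ((Nat.mul_le_mul hy3 (h.two_pow_le_card_par T hTr)).trans h1)).trans h2
  have hfix := card_le_mul_card_fix A x
  have hcube := h.card_cube_le_of_fix (A := fix A x) (P := par σ (({j} : Finset ℕ) : Set ℕ))
    (fun a ha p hp => hAc a ha.1 p (hTA (par_mono σ (by simpa using hjT) hp)))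
    (transitive_of_moving hk hx) (b := x) (fun a ha => ha.2)
    fun a ha a' ha' => (hAc a ha.1 a' ha'.1).eq
  rw [hk] at hfix
  calc (9 * 2 ^ T.card) ^ 3 ≤ (2 * Nat.card (fix A x)) ^ 3 := Nat.pow_le_pow_left (by omega) 3
    _ = 8 * Nat.card (fix A x) ^ 3 := by ring
    _ ≤ 8 * 3 ^ ℓ := Nat.mul_le_mul_left 8 hcube

end IsBlockFamily
end TwoBlocks

section Endgame
variable {G Ω K : Type*} [Group G] [MulAction G Ω] [MulAction G K]
  {σ : ℕ → G} {r : ℕ} {β : Ω → K} {ℓ : ℕ}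

namespace IsBlockFamily

/-- A maximal sparse set of generators fixing the blocks realises, on each block, every
generator that commutes with it. -/
lemma exists_eq_on_fiber_of_maximal [Finite G] [Finite Ω] (h : IsBlockFamily σ r β ℓ)
    {P : Subgroup G} (hP : ∀ x y : K, ∃ p ∈ P, p • x = y) {z : ℕ} (hz : z < r)
    (hzK : ∀ x : K, σ z • x = x) {S : Finset ℕ} (hSr : ∀ i ∈ S, i < r) (hSs : IsSparse S)
    (hSK : ∀ i ∈ S, ∀ x : K, σ i • x = x) (hSc : S.card = ℓ / 2) (hSz : IsApart S {z})
    (hSP : ∀ g ∈ par σ (S : Set ℕ), ∀ p ∈ P, Commute g p) (b : K) :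
    ∃ e ∈ par σ (S : Set ℕ), ∀ x, β x = b → σ z • x = e • x := by
  have hcomm : ∀ i ∈ (insert z S : Set ℕ), ∀ k ∈ (insert z S : Set ℕ), Commute (σ i) (σ k) := by
    rintro i (rfl | hi) k (rfl | hk)
    · exact Commute.refl _
    · exact (h.commute_of_isApart hSr (by simpa using hz) hSz k hk _ (by simp)).symm
    · exact h.commute_of_isApart hSr (by simpa using hz) hSz i hi _ (by simp)
    · exact h.commute_of_apart (hSr i hi) (hSr k hk) (hSs i hi k hk)
  have hsq := sq_eq_one_of_mem_par (σ := σ) (J := (insert z S : Set ℕ))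
    (by
      rintro i (rfl | hi)
      · exact h.sq i hz
      · exact h.sq i (hSr i hi)) hcomm
  have hfix := smul_eq_of_mem_par (σ := σ) (K := K) (T := (insert z S : Set ℕ)) (by
    rintro i (rfl | hi)
    · exact hzK
    · exact hSK i hi)
  let A := par σ (insert z S : Set ℕ)
  let := fiberAction h.map_smul A b fun g hg => hfix g hg b
  let φ := MulAction.toPermHom A {y // β y = b}
  have hval : ∀ (s : A) (y : {y // β y = b}), (φ s y).1 = (s : G) • y.1 := fun _ _ => rfl
  have hle : par σ (S : Set ℕ) ≤ A := par_mono σ (Set.subset_insert _ _)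
  have hR : Nat.card φ.range ≤ 2 ^ (ℓ / 2) := by
    rw [← h.card_fiber b]
    refine card_le_two_pow ?_ fun a ha => Subtype.ext (Equiv.ext fun y => ha y)
    rintro ⟨_, a, rfl⟩
    refine Subtype.ext ?_
    change φ a * φ a = 1
    rw [← map_mul, ← map_one φ]
    exact congrArg φ (Subtype.ext (hsq a a.2))
  let ψ : par σ (S : Set ℕ) →* φ.range := φ.rangeRestrict.comp (Subgroup.inclusion hle)
  have hψ : Function.Injective ψ := (injective_iff_map_eq_one _).2 fun a ha => by
    refine Subtype.ext (h.eq_one_of_fix_fiber hSP hP a.2 (b := b) fun y hy => ?_)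
    exact congrArg Subtype.val (Equiv.ext_iff.1 (congrArg Subtype.val ha) ⟨y, hy⟩)
  have hS2 := h.two_pow_le_card_par S hSr
  rw [hSc] at hS2
  have hsurj : Function.Surjective ψ :=
    ((Nat.bijective_iff_injective_and_card ψ).2
      ⟨hψ, le_antisymm (Nat.card_le_card_of_injective ψ hψ) (hR.trans hS2)⟩).2
  obtain ⟨e, he⟩ := hsurj (φ.rangeRestrict ⟨σ z, mem_par (Set.mem_insert _ _)⟩)
  refine ⟨e, e.2, fun y hy => ?_⟩
  exact (congrArg Subtype.val (Equiv.ext_iff.1 (congrArg Subtype.val he) ⟨y, hy⟩)).symm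

lemma exists_eq_on_fiber [Finite G] [Finite Ω] [Finite K] (h : IsBlockFamily σ r β ℓ)
    (hk : Nat.card K = 2) {j z : ℕ} (hj : j < r) {x : K} (hx : σ j • x ≠ x) (hz : z < r)
    (hzK : ∀ x : K, σ z • x = x) {S S' : Finset ℕ} (hr : ∀ i ∈ S ∪ S', i < r)
    (hSK : ∀ i ∈ S ∪ S', ∀ x : K, σ i • x = x) (hapart : IsApart (S ∪ S') {j, z})
    (hSs : IsSparse S) (hSs' : IsSparse S') (hSc : S.card = ℓ / 2) (hSc' : S'.card = ℓ / 2)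
    (b : K) : ∃ e ∈ par σ ((S : Set ℕ) ∩ S'), ∀ x, β x = b → σ z • x = e • x := by
  have hP := transitive_of_moving (σ := σ) hk hx
  have hcP : ∀ g ∈ par σ ((S ∪ S' : Finset ℕ) : Set ℕ),
      ∀ p ∈ par σ (({j} : Finset ℕ) : Set ℕ), Commute g p :=
    commute_par_par (h.commute_of_isApart hr (by simpa using hj)
      fun i hi k hk => hapart i hi k (by
        rw [Finset.mem_singleton.1 hk]
        simp))
  have hS : S ⊆ S ∪ S' := Finset.subset_union_left
  have hS' : S' ⊆ S ∪ S' := Finset.subset_union_right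
  have hm := par_mono σ (Finset.coe_subset.2 hS)
  have hm' := par_mono σ (Finset.coe_subset.2 hS')
  have hap : IsApart (S ∪ S') {z} := fun i hi k hk => hapart i hi k (by
    rw [Finset.mem_singleton.1 hk]
    simp)
  obtain ⟨e, he, hez⟩ := h.exists_eq_on_fiber_of_maximal hP hz hzK (fun i hi => hr i (hS hi)) hSs
    (fun i hi => hSK i (hS hi)) hSc (fun i hi => hap i (hS hi)) (fun g hg => hcP g (hm hg)) b
  obtain ⟨e', he', hez'⟩ := h.exists_eq_on_fiber_of_maximal hP hz hzK (fun i hi => hr i (hS' hi))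
    hSs' (fun i hi => hSK i (hS' hi)) hSc' (fun i hi => hap i (hS' hi))
    (fun g hg => hcP g (hm' hg)) b
  have hee : e⁻¹ * e' = 1 := by
    refine h.eq_one_of_fix_fiber hcP hP (mul_mem (inv_mem (hm he)) (hm' he')) (b := b)
      fun y hy => ?_
    rw [mul_smul, inv_smul_eq_iff, ← hez y hy, ← hez' y hy]
  obtain rfl := inv_mul_eq_one.1 hee
  exact ⟨e, h.ip _ _ (fun i hi => hr i (hS hi)) (fun i hi => hr i (hS' hi)) ⟨he, he'⟩, hez⟩

lemma false_of_disjoint_maximal [Finite G] [Finite Ω] [Finite K] (h : IsBlockFamily σ r β ℓ)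
    (hk : Nat.card K = 2) {j z : ℕ} (hj : j < r) {x : K} (hx : σ j • x ≠ x) (hz : z < r)
    (hzK : ∀ x : K, σ z • x = x) {S S' : Finset ℕ} (hr : ∀ i ∈ S ∪ S', i < r)
    (hSK : ∀ i ∈ S ∪ S', ∀ x : K, σ i • x = x) (hapart : IsApart (S ∪ S') {j, z})
    (hSs : IsSparse S) (hSs' : IsSparse S') (hSc : S.card = ℓ / 2) (hSc' : S'.card = ℓ / 2)
    (hdis : Disjoint S S') : False := by
  refine h.ne z hz (h.faithful _ fun y => ?_)
  obtain ⟨e, he, hez⟩ := h.exists_eq_on_fiber hk hj hx hz hzK hr hSK hapart hSs hSs' hSc hSc' (β y)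
  rw [← Finset.coe_inter, Finset.disjoint_iff_inter_eq_empty.1 hdis, Finset.coe_empty, par_empty,
    Subgroup.mem_bot] at he
  rw [hez y rfl, he, one_smul]

lemma false_of_inter_singleton [Finite G] [Finite Ω] [Finite K] (h : IsBlockFamily σ r β ℓ)
    (hk : Nat.card K = 2) {j z w q : ℕ} (hj : j < r) {x : K} (hx : σ j • x ≠ x) (hz : z < r)
    (hzK : ∀ x : K, σ z • x = x) {S S' : Finset ℕ} (hr : ∀ i ∈ S ∪ S', i < r)
    (hSK : ∀ i ∈ S ∪ S', ∀ x : K, σ i • x = x) (hapart : IsApart (S ∪ S') {j, z})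
    (hSs : IsSparse S) (hSs' : IsSparse S') (hSc : S.card = ℓ / 2) (hSc' : S'.card = ℓ / 2)
    (hinter : S ∩ S' = {q}) (hw : w < r) (hwz : IsApart {z} {w}) {x' : K} (hx' : σ w • x' ≠ x') :
    False := by
  have hqS : q ∈ S ∪ S' := Finset.mem_union_left _
    (Finset.inter_subset_left (hinter ▸ Finset.mem_singleton_self q))
  have hqz : z ≠ q := fun e => by
    have := hapart q hqS z (by simp)
    omega
  have hq := hr q hqS
  refine h.notMem_par hz (J := {q}) (by simpa using hq) (by simpa using hqz) ?_
  have heq : (σ q)⁻¹ * σ z = 1 := h.faithful _ fun y => by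
    obtain ⟨e, he, hez⟩ := h.exists_eq_on_fiber hk hj hx hz hzK hr hSK hapart hSs hSs' hSc hSc'
      (β y)
    rw [← Finset.coe_inter, hinter, Finset.coe_singleton] at he
    rcases h.mem_par_singleton hq he with rfl | rfl
    · refine absurd (h.eq_one_of_fix_fiber (A := par σ (({z} : Finset ℕ) : Set ℕ)) ?_
        (transitive_of_moving (σ := σ) hk hx') (mem_par (by simp)) (b := β y)
        fun y' hy' => by rw [hez y' hy', one_smul]) (h.ne z hz)
      exact commute_par_par (h.commute_of_isApart (by simpa using hz) (by simpa using hw) hwz)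
    · rw [mul_smul, hez y rfl, inv_smul_smul]
  rw [← inv_mul_eq_one.1 heq]
  exact mem_par rfl

lemma not_commute_of_moving [Finite G] [Finite Ω] [Finite K] (h : IsBlockFamily σ r β ℓ)
    (hk : Nat.card K = 2) {j c c' : ℕ} (hj : j < r) {x : K} (hx : σ j • x ≠ x) {T : Finset ℕ}
    (hr : ∀ i ∈ {c, c'} ∪ T, i < r) (hTj : IsApart ({c, c'} ∪ T) {j}) (hcT : IsApart {c, c'} T)
    (hT : IsSparse T) (hcard : ℓ / 2 < ({c, c'} ∪ T : Finset ℕ).card) :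
    ¬ Commute (σ c) (σ c') := fun hcom => by
  have hcr : ∀ i ∈ ({c, c'} : Finset ℕ), i < r := fun i hi => hr i (Finset.mem_union_left _ hi)
  have hTr : ∀ i ∈ T, i < r := fun i hi => hr i (Finset.mem_union_right _ hi)
  have hcTc := h.commute_of_isApart hcr hTr hcT
  refine absurd (h.card_le_half_of_moving hk hj hx hr hTj fun i hi k hk => ?_) hcard.not_ge
  rcases Finset.mem_union.1 hi with hi' | hi' <;> rcases Finset.mem_union.1 hk with hk' | hk'
  · simp only [Finset.mem_insert, Finset.mem_singleton] at hi' hk'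
    rcases hi' with rfl | rfl <;> rcases hk' with rfl | rfl
    · exact Commute.refl _
    · exact hcom
    · exact hcom.symm
    · exact Commute.refl _
  · exact hcTc i hi' k hk'
  · exact (hcTc k hk' i hi').symm
  · exact h.commute_of_apart (hTr i hi') (hTr k hk') (hT i hi' k hk')

lemma false_of_two_five [Finite G] [Finite Ω] [Finite K] (h : IsBlockFamily σ 7 β 5)
    (hk : Nat.card K = 2) : False := by
  have hfix : ∀ i < 7, i ≠ 1 → i ≠ 5 → ∀ x : K, σ i • x = x := fun i hi h1 h5 x => by
    by_contra hx
    have hodd := (h.two_block_cases hk le_rfl (by norm_num) hi hx).2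
    obtain rfl : i = 3 := by omega
    have := h.card_cube_le_of_noncommuting_pairs hk hx (c := 0) (c' := 1) (d := 5) (d' := 6)
      (T := {3}) (by decide) (by decide) (by decide) (by decide) (by decide) (by decide)
      (h.not_commute_of_moving hk hi hx (T := {5}) (by decide) (by decide) (by decide) (by decide)
        (by decide))
      (h.not_commute_of_moving hk hi hx (T := {0}) (by decide) (by decide) (by decide) (by decide)
        (by decide))
    exact absurd this (by norm_num)
  by_cases h1 : ∀ x : K, σ 1 • x = x
  · by_cases h5 : ∀ x : K, σ 5 • x = x
    · obtain ⟨j, hj, x, hx⟩ := h.exists_moving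
      by_cases hj1 : j = 1
      · exact hx (hj1 ▸ h1 x)
      by_cases hj5 : j = 5
      · exact hx (hj5 ▸ h5 x)
      exact hx (hfix j hj hj1 hj5 x)
    · obtain ⟨x, hx⟩ := not_forall.1 h5
      refine h.false_of_disjoint_maximal hk (j := 5) (z := 6) (by decide) hx (by decide)
        (hfix 6 (by decide) (by decide) (by decide)) (S := {0, 2}) (S' := {1, 3}) (by decide)
        (fun i hi => ?_) (by decide) (by decide) (by decide) (by decide) (by decide) (by decide)
      by_cases hi1 : i = 1
      · exact hi1 ▸ h1
      · have : i < 4 := (by decide : ∀ i ∈ ({0, 2} ∪ {1, 3} : Finset ℕ), i < 4) i hi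
        exact hfix i (by omega) hi1 (by omega)
  · obtain ⟨x', hx'⟩ := not_forall.1 h1
    by_cases h5 : ∀ x : K, σ 5 • x = x
    · refine h.false_of_disjoint_maximal hk (j := 1) (z := 0) (by decide) hx' (by decide)
        (hfix 0 (by decide) (by decide) (by decide)) (S := {4, 6}) (S' := {3, 5}) (by decide)
        (fun i hi => ?_) (by decide) (by decide) (by decide) (by decide) (by decide) (by decide)
      by_cases hi5 : i = 5
      · exact hi5 ▸ h5
      · have : 3 ≤ i ∧ i < 7 := (by decide : ∀ i ∈ ({4, 6} ∪ {3, 5} : Finset ℕ), 3 ≤ i ∧ i < 7) i hi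
        exact hfix i (by omega) (by omega) hi5
    · obtain ⟨x, hx⟩ := not_forall.1 h5
      refine h.false_of_inter_singleton hk (j := 5) (z := 6) (w := 1) (q := 0) (by decide) hx
        (by decide) (hfix 6 (by decide) (by decide) (by decide)) (S := {0, 2}) (S' := {0, 3})
        (by decide) (fun i hi => ?_) (by decide) (by decide) (by decide) (by decide) (by decide)
        (by decide) (by decide) (by decide) hx'
      have : i < 4 ∧ i ≠ 1 := (by decide : ∀ i ∈ ({0, 2} ∪ {0, 3} : Finset ℕ), i < 4 ∧ i ≠ 1) i hi
      exact hfix i (by omega) this.2 (by omega)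

lemma false_of_two_six [Finite G] [Finite Ω] [Finite K] (h : IsBlockFamily σ 9 β 6)
    (hk : Nat.card K = 2) : False := by
  have hfix : ∀ i < 9, i ≠ 1 → i ≠ 7 → ∀ x : K, σ i • x = x := fun i hi h1 h7 x => by
    by_contra hx
    have hodd := (h.two_block_cases hk (by norm_num) (by norm_num) hi hx).2
    have hi35 : i = 3 ∨ i = 5 := by omega
    rcases hi35 with rfl | rfl
    · have := h.card_cube_le_of_noncommuting_pairs hk hx (c := 0) (c' := 1) (d := 7) (d' := 8)
        (T := {3, 5}) (by decide) (by decide) (by decide) (by decide) (by decide) (by decide)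
        (h.not_commute_of_moving hk hi hx (T := {5, 7}) (by decide) (by decide) (by decide)
          (by decide) (by decide))
        (h.not_commute_of_moving hk hi hx (T := {0, 5}) (by decide) (by decide) (by decide)
          (by decide) (by decide))
      exact absurd this (by norm_num)
    · have := h.card_cube_le_of_noncommuting_pairs hk hx (c := 0) (c' := 1) (d := 7) (d' := 8)
        (T := {3, 5}) (by decide) (by decide) (by decide) (by decide) (by decide) (by decide)
        (h.not_commute_of_moving hk hi hx (T := {3, 7}) (by decide) (by decide) (by decide)
          (by decide) (by decide))
        (h.not_commute_of_moving hk hi hx (T := {0, 3}) (by decide) (by decide) (by decide)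
          (by decide) (by decide))
      exact absurd this (by norm_num)
  by_cases h1 : ∀ x : K, σ 1 • x = x
  · by_cases h7 : ∀ x : K, σ 7 • x = x
    · obtain ⟨j, hj, x, hx⟩ := h.exists_moving
      by_cases hj1 : j = 1
      · exact hx (hj1 ▸ h1 x)
      by_cases hj7 : j = 7
      · exact hx (hj7 ▸ h7 x)
      exact hx (hfix j hj hj1 hj7 x)
    · obtain ⟨x, hx⟩ := not_forall.1 h7
      refine h.false_of_disjoint_maximal hk (j := 7) (z := 8) (by decide) hx (by decide)
        (hfix 8 (by decide) (by decide) (by decide)) (S := {0, 2, 4}) (S' := {1, 3, 5}) (by decide)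
        (fun i hi => ?_) (by decide) (by decide) (by decide) (by decide) (by decide) (by decide)
      by_cases hi1 : i = 1
      · exact hi1 ▸ h1
      · have : i < 6 := (by decide : ∀ i ∈ ({0, 2, 4} ∪ {1, 3, 5} : Finset ℕ), i < 6) i hi
        exact hfix i (by omega) hi1 (by omega)
  · obtain ⟨x', hx'⟩ := not_forall.1 h1
    by_cases h7 : ∀ x : K, σ 7 • x = x
    · refine h.false_of_disjoint_maximal hk (j := 1) (z := 0) (by decide) hx' (by decide)
        (hfix 0 (by decide) (by decide) (by decide)) (S := {4, 6, 8}) (S' := {3, 5, 7}) (by decide)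
        (fun i hi => ?_) (by decide) (by decide) (by decide) (by decide) (by decide) (by decide)
      by_cases hi7 : i = 7
      · exact hi7 ▸ h7
      · have : 3 ≤ i ∧ i < 9 :=
          (by decide : ∀ i ∈ ({4, 6, 8} ∪ {3, 5, 7} : Finset ℕ), 3 ≤ i ∧ i < 9) i hi
        exact hfix i (by omega) (by omega) hi7
    · obtain ⟨x, hx⟩ := not_forall.1 h7
      refine h.false_of_inter_singleton hk (j := 7) (z := 8) (w := 1) (q := 0) (by decide) hx
        (by decide) (hfix 8 (by decide) (by decide) (by decide)) (S := {0, 2, 4}) (S' := {0, 3, 5})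
        (by decide) (fun i hi => ?_) (by decide) (by decide) (by decide) (by decide) (by decide)
        (by decide) (by decide) (by decide) hx'
      have : i < 6 ∧ i ≠ 1 :=
        (by decide : ∀ i ∈ ({0, 2, 4} ∪ {0, 3, 5} : Finset ℕ), i < 6 ∧ i ≠ 1) i hi
      exact hfix i (by omega) this.2 (by omega)

/-- There is no block family of rank at least `m - 3` on `m ≥ 9` points. -/
theorem rank_lt [Finite G] [Finite Ω] [Finite K] (h : IsBlockFamily σ r β ℓ)
    (hk : 2 ≤ Nat.card K) (hl : 2 ≤ ℓ) (hkl : 9 ≤ Nat.card K * ℓ) : r + 3 < Nat.card K * ℓ := by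
  by_contra! hr
  rcases hk.eq_or_lt' with hk | hk
  · rw [hk] at hkl hr
    obtain ⟨j, hj, x, hx⟩ := h.exists_moving
    rcases (h.two_block_cases hk (by omega) hr hj hx).1 with ⟨rfl, rfl⟩ | ⟨rfl, rfl⟩
    · exact h.false_of_two_five hk
    · exact h.false_of_two_six hk
  · rcases h.card_eq_of_three_le hk hl hkl hr with ⟨hk, rfl⟩ | ⟨hk, rfl⟩
    · exact h.false_of_three_three hk (by omega)
    · exact h.false_of_five_two hk (by omega)

end IsBlockFamily
end Endgame

lemma card_eq_card_mul_of_fibers {α γ : Type*} [Finite α] [Finite γ] (f : α → γ) {c : ℕ}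
    (hf : ∀ b, Nat.card {x // f x = b} = c) : Nat.card α = Nat.card γ * c := by
  have := Fintype.ofFinite γ
  rw [Nat.card_congr (Equiv.sigmaFiberEquiv f).symm, Nat.card_sigma]
  simp [hf]

/-- The action induced on the quotient by an invariant equivalence relation. -/
@[reducible] def quotientAction {G α : Type*} [Group G] [MulAction G α] (s : Setoid α)
    (hs : ∀ (g : G) (x y : α), s x y → s (g • x) (g • y)) : MulAction G (Quotient s) where
  smul g := Quotient.map (g • ·) fun x y hxy => hs g x y hxy
  one_smul q := q.inductionOn fun x => congrArg (Quotient.mk s) (one_smul G x)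
  mul_smul g k q := q.inductionOn fun x => congrArg (Quotient.mk s) (mul_smul g k x)

section Reduction
variable {α : Type*}

/-- The permutations preserving an equivalence relation. -/
def setoidStabilizer (s : Setoid α) : Subgroup (Equiv.Perm α) where
  carrier := {g | ∀ x y, s x y ↔ s (g x) (g y)}
  one_mem' _ _ := Iff.rfl
  mul_mem' {g k} hg hk x y := (hk x y).trans (hg (k x) (k y))
  inv_mem' {g} hg x y := by
    simpa [iff_comm] using hg (g⁻¹ x) (g⁻¹ y)

lemma mem_setoidStabilizer_of_sq {s : Setoid α} {g : Equiv.Perm α} (hg : g * g = 1)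
    (h : ∀ x y, s x y → s (g x) (g y)) : g ∈ setoidStabilizer s := fun x y =>
  ⟨h x y, fun hxy => by
    have := h _ _ hxy
    rwa [← Equiv.Perm.mul_apply, ← Equiv.Perm.mul_apply, hg] at this⟩

/-- The equivalence relation whose classes are the orbits of an involution. -/
def involutionSetoid (z : Equiv.Perm α) (hz : z * z = 1) : Setoid α where
  r x y := y = x ∨ y = z x
  iseqv :=
    { refl := fun _ => Or.inl rfl
      symm := by
        rintro x y (rfl | rfl)
        · exact Or.inl rfl
        · exact Or.inr (by rw [← Equiv.Perm.mul_apply, hz, Equiv.Perm.one_apply])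
      trans := by
        rintro x y w (rfl | rfl) (rfl | rfl)
        · exact Or.inl rfl
        · exact Or.inr rfl
        · exact Or.inr rfl
        · exact Or.inl (by rw [← Equiv.Perm.mul_apply, hz, Equiv.Perm.one_apply]) }

lemma card_quotient_involutionSetoid [Finite α] (z : Equiv.Perm α) (hz : z * z = 1)
    (hfree : ∀ x, z x ≠ x) :
    Nat.card α = Nat.card (Quotient (involutionSetoid z hz)) * 2 := by
  have : Finite (Quotient (involutionSetoid z hz)) := Quotient.finite _
  refine card_eq_card_mul_of_fibers (Quotient.mk (involutionSetoid z hz)) fun q => ?_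
  obtain ⟨x, rfl⟩ := Quotient.exists_rep q
  have h1 : (Quotient.mk (involutionSetoid z hz) (z x)) = Quotient.mk _ x :=
    Quotient.sound (Setoid.symm' _ (Or.inr rfl))
  rw [Nat.card_eq_two_iff' ⟨x, rfl⟩]
  refine ⟨⟨z x, h1⟩, fun e => hfree x (congrArg Subtype.val e), fun y hy => Subtype.ext ?_⟩
  rcases Setoid.symm' _ (Quotient.exact y.2) with e | e
  · exact absurd (Subtype.ext e) hy
  · exact e

/-- The equivalence relation of lying in the same translates of `X` under `H`. -/
def translateSetoid (H : Subgroup (Equiv.Perm α)) (X : Set α) : Setoid α where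
  r x y := ∀ g ∈ H, (g x ∈ X ↔ g y ∈ X)
  iseqv :=
    { refl := fun _ _ _ => Iff.rfl
      symm := fun h g hg => (h g hg).symm
      trans := fun h h' g hg => (h g hg).trans (h' g hg) }

lemma exists_maximal_invariant_setoid [Finite α] (H : Subgroup (Equiv.Perm α)) {t : Setoid α}
    (ht : H ≤ setoidStabilizer t) (hne : t ≠ ⊤) :
    ∃ s : Setoid α, t ≤ s ∧ s ≠ ⊤ ∧ H ≤ setoidStabilizer s ∧
      ∀ s' : Setoid α, s ≤ s' → H ≤ setoidStabilizer s' → s' = s ∨ s' = ⊤ := by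
  have : Finite (Setoid α) := Finite.of_injective (fun s : Setoid α => (s : α → α → Prop))
    fun s s' h => Setoid.ext fun x y => by rw [show s x y = s' x y from congrFun₂ h x y]
  obtain ⟨s, hts, hs⟩ := Finite.exists_le_maximal
    (p := fun s : Setoid α => s ≠ ⊤ ∧ H ≤ setoidStabilizer s) ⟨hne, ht⟩
  refine ⟨s, hts, hs.prop.1, hs.prop.2, fun s' hss' hs' => ?_⟩
  by_cases h : s' = ⊤
  · exact Or.inr h
  · exact Or.inl (hs.eq_of_ge ⟨h, hs'⟩ hss')

end Reduction

section Tail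
variable {α : Type*} {r : ℕ}

/-- The generators `ρ 1, …, ρ r`, as elements of the subgroup they generate. -/
noncomputable def tailFamily (ρ : Fin (r + 1) → Equiv.Perm α) (i : ℕ) :
    ↥(Subgroup.closure (ρ '' {j | j ≠ 0})) :=
  if h : i < r then
    ⟨ρ (Fin.succ ⟨i, h⟩), Subgroup.subset_closure ⟨_, Fin.succ_ne_zero _, rfl⟩⟩
  else 1

lemma coe_tailFamily (ρ : Fin (r + 1) → Equiv.Perm α) {i : ℕ} (h : i < r) :
    (tailFamily ρ i : Equiv.Perm α) = ρ (Fin.succ ⟨i, h⟩) := by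
  rw [tailFamily, dif_pos h]

lemma map_par_tailFamily (ρ : Fin (r + 1) → Equiv.Perm α) {J : Set ℕ} (hJ : J ⊆ Set.Iio r) :
    (par (tailFamily ρ) J).map (Subgroup.subtype _) =
      Subgroup.closure (ρ '' {j | ∃ i ∈ J, (j : ℕ) = i + 1}) := by
  rw [par, MonoidHom.map_closure]
  congr 1
  ext g
  constructor
  · rintro ⟨-, ⟨i, hi, rfl⟩, rfl⟩
    exact ⟨Fin.succ ⟨i, hJ hi⟩, ⟨i, hi, rfl⟩, (coe_tailFamily ρ (hJ hi)).symm⟩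
  · rintro ⟨j, ⟨i, hi, hj⟩, rfl⟩
    refine ⟨_, ⟨i, hi, rfl⟩, (coe_tailFamily ρ (hJ hi)).trans (congrArg ρ ?_)⟩
    exact Fin.ext hj.symm

lemma isStringFamily_tailFamily {ρ : Fin (r + 1) → Equiv.Perm α}
    (hsq : ∀ i, ρ i * ρ i = 1) (hne : ∀ i, ρ i ≠ 1)
    (hcomm : ∀ i j : Fin (r + 1), (i : ℕ) + 1 < j → Commute (ρ i) (ρ j))
    (hip : ∀ J K : Set (Fin (r + 1)), Subgroup.closure (ρ '' J) ⊓ Subgroup.closure (ρ '' K) ≤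
      Subgroup.closure (ρ '' (J ∩ K))) :
    IsStringFamily (tailFamily ρ) r where
  sq i hi := Subtype.ext <| by
    rw [Subgroup.coe_mul, coe_tailFamily ρ hi, hsq, Subgroup.coe_one]
  ne i hi h := hne (Fin.succ ⟨i, hi⟩) <| by rw [← coe_tailFamily ρ hi, h, Subgroup.coe_one]
  comm i j hij hj := Subtype.ext <| by
    rw [Subgroup.coe_mul, Subgroup.coe_mul, coe_tailFamily ρ hj,
      coe_tailFamily ρ (by omega : i < r)]
    exact hcomm _ _ (by simpa using hij)
  ip J K hJ hK g hg := by
    have h1 := Subgroup.mem_map_of_mem (Subgroup.subtype _) hg.1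
    have h2 := Subgroup.mem_map_of_mem (Subgroup.subtype _) hg.2
    rw [map_par_tailFamily ρ hJ] at h1
    rw [map_par_tailFamily ρ hK] at h2
    have h3 := hip _ _ ⟨h1, h2⟩
    have h4 : {j : Fin (r + 1) | ∃ i ∈ J, (j : ℕ) = i + 1} ∩ {j | ∃ i ∈ K, (j : ℕ) = i + 1} =
        {j : Fin (r + 1) | ∃ i ∈ J ∩ K, (j : ℕ) = i + 1} := by
      ext j
      constructor
      · rintro ⟨⟨i, hi, hj⟩, ⟨i', hi', hj'⟩⟩
        obtain rfl : i = i' := by omega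
        exact ⟨i, ⟨hi, hi'⟩, hj⟩
      · rintro ⟨i, hi, hj⟩
        exact ⟨⟨i, hi.1, hj⟩, ⟨i, hi.2, hj⟩⟩
    rw [h4, ← map_par_tailFamily ρ (Set.inter_subset_left.trans hJ)] at h3
    obtain ⟨k, hk, e⟩ := h3
    rwa [← Subtype.ext e]

/-- If the involution `ρ 0` is central and its orbits are strictly contained in the blocks of a
maximal block system, then the rank is small compared with the number of orbits. -/
theorem rank_lt_of_maximal_setoid [Finite α] {ρ : Fin (r + 1) → Equiv.Perm α}
    (hsq : ∀ i, ρ i * ρ i = 1) (hne : ∀ i, ρ i ≠ 1)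
    (hcomm : ∀ i j : Fin (r + 1), (i : ℕ) + 1 < j → Commute (ρ i) (ρ j))
    (hip : ∀ J K : Set (Fin (r + 1)), Subgroup.closure (ρ '' J) ⊓ Subgroup.closure (ρ '' K) ≤
      Subgroup.closure (ρ '' (J ∩ K)))
    (hcentral : ∀ i, Commute (ρ 0) (ρ i)) (hfree : ∀ x, ρ 0 x ≠ x)
    (htrans : MulAction.IsPretransitive ↥(Subgroup.closure (ρ '' {j | j ≠ 0})) α)
    (hfaithful : ∀ g ∈ Subgroup.closure (Set.range ρ), (∀ x, g x = x ∨ g x = ρ 0 x) →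
      g = 1 ∨ g = ρ 0)
    {s : Setoid α} (hlt : involutionSetoid (ρ 0) (hsq 0) < s) (htop : s ≠ ⊤)
    (hs : Subgroup.closure (Set.range ρ) ≤ setoidStabilizer s)
    (hmax : ∀ s' : Setoid α, s ≤ s' → Subgroup.closure (Set.range ρ) ≤ setoidStabilizer s' →
      s' = s ∨ s' = ⊤)
    (hcard : 7 * 2 ≤ Nat.card α) (hcard' : Nat.card α ≠ 8 * 2) : (r + 3) * 2 < Nat.card α := by
  set H₀ := Subgroup.closure (ρ '' {j | j ≠ 0}) with hH₀
  have hle : H₀ ≤ Subgroup.closure (Set.range ρ) :=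
    Subgroup.closure_mono (Set.image_subset_range _ _)
  set s₀ := involutionSetoid (ρ 0) (hsq 0) with hs₀
  have hinv₀ : ∀ (g : H₀) (x y : α), s₀ x y → s₀ (g • x) (g • y) := by
    have : H₀ ≤ setoidStabilizer s₀ := by
      rw [hH₀, Subgroup.closure_le]
      rintro - ⟨i, -, rfl⟩
      refine mem_setoidStabilizer_of_sq (hsq i) ?_
      rintro x y (rfl | rfl)
      · exact Or.inl rfl
      · right
        rw [← Equiv.Perm.mul_apply, ← Equiv.Perm.mul_apply, (hcentral i).eq]
    exact fun g x y => (this g.2 x y).1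
  have hinv : ∀ (g : H₀) (x y : α), s x y → s (g • x) (g • y) :=
    fun g x y => (hs (hle g.2) x y).1
  let := quotientAction s₀ hinv₀
  let := quotientAction s hinv
  have : Finite (Quotient s₀) := Quotient.finite _
  have : Finite (Quotient s) := Quotient.finite _
  let β : Quotient s₀ → Quotient s := Quotient.map id fun x y h => hlt.le h
  have hβ : ∀ (g : H₀) q, β (g • q) = g • β q := fun g q => q.inductionOn fun x => rfl
  have hmk : ∀ (g : H₀) (x : α), g • (Quotient.mk s x) = Quotient.mk s (g • x) := fun _ _ => rfl
  have hfib : ∀ b c, Nat.card {x // β x = b} = Nat.card {x // β x = c} := by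
    intro b c
    obtain ⟨x, rfl⟩ := Quotient.exists_rep b
    obtain ⟨y, rfl⟩ := Quotient.exists_rep c
    obtain ⟨g, rfl⟩ := MulAction.exists_smul_eq H₀ x y
    refine Nat.card_congr ((MulAction.toPerm g).subtypeEquiv fun q => ?_)
    rw [MulAction.toPerm_apply, hβ, ← hmk, smul_left_cancel_iff]
  have hsym : ∃ x y, ¬ s x y := by
    by_contra! h
    exact htop (eq_top_iff.2 fun x y _ => h x y)
  obtain ⟨u, v, huv⟩ := hsym
  have hk : 2 ≤ Nat.card (Quotient s) := by
    have : Nontrivial (Quotient s) := ⟨_, _, fun e => huv (Quotient.exact e)⟩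
    exact Finite.one_lt_card
  obtain ⟨x, y, hxy, hxy₀⟩ : ∃ x y, s x y ∧ ¬ s₀ x y := by
    by_contra! h
    exact hlt.not_ge fun x y => h x y
  have hl : 2 ≤ Nat.card {q // β q = Quotient.mk s x} := by
    have : Nontrivial {q // β q = Quotient.mk s x} :=
      ⟨⟨Quotient.mk s₀ x, rfl⟩, ⟨Quotient.mk s₀ y, Quotient.sound (Setoid.symm' _ hxy)⟩,
        fun e => hxy₀ (Quotient.exact (congrArg Subtype.val e))⟩
    exact Finite.one_lt_card
  have hprod := card_eq_card_mul_of_fibers β fun b => hfib b (Quotient.mk s x)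
  have hdouble : Nat.card α = Nat.card (Quotient s₀) * 2 :=
    card_quotient_involutionSetoid (ρ 0) (hsq 0) hfree
  have hfam : IsBlockFamily (tailFamily ρ) r β (Nat.card {q // β q = Quotient.mk s x}) :=
    { isStringFamily_tailFamily hsq hne hcomm hip with
      map_smul := hβ
      faithful := fun g hg => by
        have hg' : ∀ x, (g : Equiv.Perm α) x = x ∨ (g : Equiv.Perm α) x = ρ 0 x := fun x =>
          Setoid.symm' s₀ (Quotient.exact (hg (Quotient.mk s₀ x)))
        rcases hfaithful g (hle g.2) hg' with e | e
        · exact Subtype.ext e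
        · exfalso
          have h1 : ρ 0 ∈ Subgroup.closure (ρ '' ({j | j ≠ 0} ∩ {0})) :=
            hip _ _ ⟨e ▸ g.2, Subgroup.subset_closure ⟨0, rfl, rfl⟩⟩
          have h2 : ({j | j ≠ 0} ∩ {0} : Set (Fin (r + 1))) = ∅ := by
            ext j
            simp
          rw [h2, Set.image_empty, Subgroup.closure_empty, Subgroup.mem_bot] at h1
          exact hne 0 h1
      card_fiber := fun b => hfib b _
      exists_moving := by
        by_contra! h
        have h1 : H₀ ≤ (MulAction.stabilizer H₀ (Quotient.mk s u)).map H₀.subtype := by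
          refine (Subgroup.closure_le _).2 ?_
          rintro - ⟨j, hj, rfl⟩
          obtain ⟨i, rfl⟩ := Fin.exists_succ_eq.2 hj
          exact ⟨tailFamily ρ i, h i i.2 _, coe_tailFamily ρ i.2⟩
        obtain ⟨g, rfl⟩ := MulAction.exists_smul_eq H₀ u v
        obtain ⟨k, hk, e⟩ := h1 g.2
        obtain rfl := Subtype.ext e
        exact huv (Setoid.symm' _ (Quotient.exact hk))
      prim := fun t ht => by
        have hst : s ≤ t.comap (Quotient.mk s) := fun x y hxy => by
          rw [Setoid.comap_rel, Quotient.sound hxy]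
        have hgen : Subgroup.closure (Set.range ρ) ≤ setoidStabilizer (t.comap (Quotient.mk s)) := by
          rw [Subgroup.closure_le]
          rintro - ⟨j, rfl⟩
          refine mem_setoidStabilizer_of_sq (hsq j) fun x y hxy => ?_
          rcases Fin.eq_zero_or_eq_succ j with rfl | ⟨i, rfl⟩
          · have hz : ∀ x, s x (ρ 0 x) := fun x => hlt.le (Or.inr rfl)
            exact Setoid.trans' _ (Setoid.symm' _ (hst (hz x))) (Setoid.trans' _ hxy (hst (hz y)))
          · have := ht i i.2 _ _ hxy
            rw [hmk, hmk] at this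
            change t (Quotient.mk s ((tailFamily ρ i : Equiv.Perm α) x))
              (Quotient.mk s ((tailFamily ρ i : Equiv.Perm α) y)) at this
            rwa [coe_tailFamily ρ i.2] at this
        rcases hmax _ hst hgen with e | e
        · left
          refine eq_bot_iff.2 fun b c => ?_
          induction b, c using Quotient.inductionOn₂ with
          | _ x y =>
            intro hbc
            have : s x y := by
              rw [← e]
              exact hbc
            exact Quotient.sound this
        · right
          refine eq_top_iff.2 fun b c _ => ?_
          induction b, c using Quotient.inductionOn₂ with
          | _ x y =>
            have : t.comap (Quotient.mk s) x y := by
              rw [e]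
              trivial
            exact this }
  have hprime : Nat.card (Quotient s₀) ≠ 7 := fun e => by
    have : Nat.Prime (Nat.card (Quotient s) * Nat.card {q // β q = Quotient.mk s x}) := by
      rw [← hprod, e]
      norm_num
    exact Nat.not_prime_mul (by omega) (by omega) this
  have := hfam.rank_lt hk hl (by omega)
  omega

end Tail

lemma commute_of_mul_sq_eq_one {G : Type*} [Group G] {a b : G} (ha : a * a = 1) (hb : b * b = 1)
    (hab : (a * b) ^ 2 = 1) : Commute a b := by
  have h : a * b = (a * b)⁻¹ := eq_inv_of_mul_eq_one_left (by rw [← sq, hab])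
  rw [mul_inv_rev, ← eq_inv_of_mul_eq_one_left ha, ← eq_inv_of_mul_eq_one_left hb] at h
  exact h

section Blocks
variable {α : Type*} {H : Subgroup (Equiv.Perm α)} {X : Set α}

lemma apply_mem_iff_of_isBlock (hX : MulAction.IsBlock ↥H X) {x y : α} (hx : x ∈ X) (hy : y ∈ X)
    {g : Equiv.Perm α} (hg : g ∈ H) : g x ∈ X ↔ g y ∈ X := by
  have key : ∀ {x y : α}, x ∈ X → y ∈ X → g x ∈ X → g y ∈ X := fun {x y} hx hy h => by
    have := MulAction.IsBlock.smul_eq_of_mem hX (g := ⟨g, hg⟩) hx h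
    rw [← this]
    exact Set.smul_mem_smul_set hy
  exact ⟨key hx hy, key hy hx⟩

lemma le_setoidStabilizer_translateSetoid (H : Subgroup (Equiv.Perm α)) (X : Set α) :
    H ≤ setoidStabilizer (translateSetoid H X) := fun g hg x y =>
  ⟨fun h k hk => h (k * g) (H.mul_mem hk hg), fun h k hk => by
    simpa using h (k * g⁻¹) (H.mul_mem hk (H.inv_mem hg))⟩

/-- A permutation moving points only within the orbits of `z`, where `z` interchanges two blocks,
is either trivial or `z`. -/
lemma eq_one_or_eq_of_isBlock {z g : Equiv.Perm α} (hX : MulAction.IsBlock ↥H X)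
    (hne : X.Nonempty) (hz : z * z = 1) (hswap : ∀ x, z x ∈ X ↔ x ∉ X)
    (hg : g ∈ H) (hcomm : Commute z g) (h : ∀ x, g x = x ∨ g x = z x) : g = 1 ∨ g = z := by
  obtain ⟨x₀, hx₀⟩ := hne
  have hzz : ∀ x, z (z x) = x := fun x => by rw [← Equiv.Perm.mul_apply, hz, Equiv.Perm.one_apply]
  have hgz : ∀ x, g (z x) = z (g x) := fun x => by
    rw [← Equiv.Perm.mul_apply, ← Equiv.Perm.mul_apply, hcomm.eq]
  have extend : ∀ k : Equiv.Perm α, (∀ x, k (z x) = z (k x)) → (∀ x ∈ X, g x = k x) → g = k := by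
    intro k hk hgk
    ext x
    by_cases hx : x ∈ X
    · exact hgk x hx
    · have := hgk (z x) ((hswap x).2 hx)
      rw [hgz, hk] at this
      exact z.injective this
  rcases h x₀ with e | e
  · left
    refine extend 1 (fun _ => rfl) fun x hx => (h x).resolve_right fun e' => ?_
    have h1 := (apply_mem_iff_of_isBlock hX hx₀ hx hg).1 (e.symm ▸ hx₀ : g x₀ ∈ X)
    rw [e', hswap] at h1
    exact h1 hx
  · right
    refine extend z (fun _ => rfl) fun x hx => (h x).resolve_left fun e' => ?_
    have h1 := (apply_mem_iff_of_isBlock hX hx₀ hx hg).2 (e'.symm ▸ hx)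
    rw [e, hswap] at h1
    exact h1 hx₀

end Blocks

lemma isBlock_eq_empty_or_orbit_or_univ {α : Type*} [Finite α] {r : ℕ}
    {ρ : Fin (r + 1) → Equiv.Perm α}
    (hsq : ∀ i, ρ i * ρ i = 1) (hne : ∀ i, ρ i ≠ 1)
    (hcomm : ∀ i j : Fin (r + 1), (i : ℕ) + 1 < j → Commute (ρ i) (ρ j))
    (hip : ∀ J K : Set (Fin (r + 1)), Subgroup.closure (ρ '' J) ⊓ Subgroup.closure (ρ '' K) ≤
      Subgroup.closure (ρ '' (J ∩ K)))
    (hcentral : ∀ i, Commute (ρ 0) (ρ i))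
    (htrans : MulAction.IsPretransitive ↥(Subgroup.closure (ρ '' {j | j ≠ 0})) α)
    {B : Set α} (hBne : B.Nonempty)
    (hBblock : MulAction.IsBlock ↥(Subgroup.closure (Set.range ρ)) B)
    (hBswap : ρ 0 '' B = Bᶜ)
    (hcard : 7 * 2 ≤ Nat.card α) (hcard' : Nat.card α ≠ 8 * 2) (hr : Nat.card α ≤ (r + 3) * 2) {X : Set α}
    (hX : MulAction.IsBlock ↥(Subgroup.closure (Set.range ρ)) X) (hXinv : ρ 0 '' X = X) :
    X = ∅ ∨ (∃ x, X = {x, ρ 0 x}) ∨ X = Set.univ := by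
  have hzz : ∀ x, ρ 0 (ρ 0 x) = x := fun x => by
    rw [← Equiv.Perm.mul_apply, hsq, Equiv.Perm.one_apply]
  have hswap : ∀ x, ρ 0 x ∈ B ↔ x ∉ B := fun x => by
    rw [← Set.mem_compl_iff, ← hBswap]
    exact ⟨fun h => ⟨_, h, hzz x⟩, by rintro ⟨y, hy, rfl⟩; rwa [hzz]⟩
  have hfree : ∀ x, ρ 0 x ≠ x := fun x e => by
    have := hswap x
    rw [e] at this
    tauto
  set H := Subgroup.closure (Set.range ρ) with hH
  have hcentralH : ∀ g ∈ H, Commute (ρ 0) g := by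
    have : H ≤ Subgroup.centralizer {ρ 0} := by
      rw [hH, Subgroup.closure_le]
      rintro - ⟨i, rfl⟩
      exact Subgroup.mem_centralizer_singleton_iff.2 (hcentral i).symm
    exact fun g hg => (Subgroup.mem_centralizer_singleton_iff.1 (this hg)).symm
  rcases X.eq_empty_or_nonempty with h | ⟨x₀, hx₀⟩
  · exact Or.inl h
  right
  by_contra! hbad
  obtain ⟨hpair, huniv⟩ := hbad
  have hXz : ∀ x, ρ 0 x ∈ X ↔ x ∈ X := fun x => by
    conv_lhs => rw [← hXinv]
    exact (ρ 0).injective.mem_set_image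
  have hle : involutionSetoid (ρ 0) (hsq 0) ≤ translateSetoid H X := by
    rintro x y (rfl | rfl) g hg
    · exact Iff.rfl
    · rw [← Equiv.Perm.mul_apply g, ← (hcentralH g hg).eq, Equiv.Perm.mul_apply, hXz]
  have htop : translateSetoid H X ≠ ⊤ := fun e => huniv <| Set.eq_univ_of_forall fun x => by
    have : translateSetoid H X x₀ x := by
      rw [e]
      trivial
    exact (this 1 H.one_mem).1 hx₀
  have hlt : involutionSetoid (ρ 0) (hsq 0) < translateSetoid H X := by
    refine lt_of_le_of_ne hle fun e => hpair x₀ (Set.Subset.antisymm (fun x hx => ?_) ?_)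
    · have : translateSetoid H X x₀ x := fun g hg => apply_mem_iff_of_isBlock hX hx₀ hx hg
      rw [← e] at this
      exact this
    · rintro x (rfl | rfl)
      · exact hx₀
      · exact (hXz x₀).2 hx₀
  obtain ⟨s, hts, hs, hinv, hmax⟩ := exists_maximal_invariant_setoid H
    (le_setoidStabilizer_translateSetoid H X) htop
  refine absurd (rank_lt_of_maximal_setoid hsq hne hcomm hip hcentral hfree htrans ?_
    (hlt.trans_le hts) hs hinv hmax hcard hcard') hr.not_gt
  exact fun g hg h => eq_one_or_eq_of_isBlock hBblock hBne (hsq 0) hswap hg (hcentralH g hg) h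

end StringCBlock

theorem stmt18 {n r : ℕ} (hm7 : 7 ≤ n / 2) (hn2 : Even n) (hn16 : n ≠ 16)
    (hr : n / 2 - 2 ≤ r)
    (ρ : Fin r → Equiv.Perm (Fin n)) (hstring : IsStringC ρ)
    -- H_0 is transitive
    (h0trans : MulAction.IsPretransitive
      ↥(Subgroup.closure (ρ '' {j : Fin r | j ≠ ⟨0, by omega⟩})) (Fin n))
    -- ρ 0 and ρ 1 commute
    (hcomm : (ρ ⟨0, by omega⟩ * ρ ⟨1, by omega⟩) ^ 2 = 1)
    -- a block system with two blocks interchanged by ρ 0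
    (B : Set (Fin n)) (hBne : B ≠ ∅) (hBuniv : B ≠ Set.univ)
    (hBblock : MulAction.IsBlock ↥(Subgroup.closure (Set.range ρ)) B)
    (hBswap : (⇑(ρ ⟨0, by omega⟩)) '' B = Bᶜ) :
    ∀ X : Set (Fin n),
      MulAction.IsBlock ↥(Subgroup.closure (Set.range ρ)) X →
      (⇑(ρ ⟨0, by omega⟩)) '' X = X →
      X = ∅ ∨ (∃ x : Fin n, X = {x, ρ ⟨0, by omega⟩ x}) ∨ X = Set.univ := by
  obtain ⟨r, rfl⟩ : ∃ m, r = m + 1 := ⟨r - 1, by omega⟩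
  obtain ⟨⟨hord, hsggi⟩, hip⟩ := hstring
  have hsq : ∀ i, ρ i * ρ i = 1 := fun i => by rw [← sq, ← hord i, pow_orderOf_eq_one]
  have hne : ∀ i, ρ i ≠ 1 := fun i e => by
    have := hord i
    rw [e, orderOf_one] at this
    omega
  have hstr : ∀ i j : Fin (r + 1), (i : ℕ) + 1 < j → Commute (ρ i) (ρ j) := fun i j hij =>
    StringCBlock.commute_of_mul_sq_eq_one (hsq i) (hsq j)
      (hsggi i j (by rw [lt_abs]; right; omega))
  have hcentral : ∀ i, Commute (ρ 0) (ρ i) := by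
    intro i
    obtain h | h | h : (i : ℕ) = 0 ∨ (i : ℕ) = 1 ∨ 1 < (i : ℕ) := by omega
    · rw [show i = 0 from Fin.ext h]
    · rw [show i = ⟨1, by omega⟩ from Fin.ext h]
      exact StringCBlock.commute_of_mul_sq_eq_one (hsq _) (hsq _) hcomm
    · exact hstr 0 i (by simpa using h)
  have heven := Nat.even_iff.1 hn2
  intro X hX hXinv
  refine StringCBlock.isBlock_eq_empty_or_orbit_or_univ hsq hne hstr (fun J K => (hip J K).le)
    hcentral h0trans (Set.nonempty_iff_ne_empty.2 hBne) hBblock hBswap ?_ ?_ ?_ hX hXinv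
  all_goals rw [Nat.card_fin]; omega
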